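/- Let a, b, s be positive integers with s < a, and let k_1, …, k_s be integers with 2 ≤ k_1 < k_2 < ⋯ < k_s ≤ a−1. Let q_1 < ⋯ < q_{a−s} be the increasing enumeration of {1,…,a} \ {a−k_1+1, …, a−k_s+1}. Then the number of lozenge tilings of H_{2a,2b}(k_1,…,k_s) invariant under 180° rotation about the center is the perfect square M_⊙(H_{2a,2b}(k_1,…,k_s)) = ( ∏_{j=1}^{a−s} C(a+b+q_j−1, 2q_j−1) · ∏_{1≤j<k≤a−s} (q_k−q_j)/(q_j+q_k−1) )², where C(n,r) denotes the binomial coefficient. -/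

import Mathlib

/-!
Geometric setup: the triangular lattice is drawn in the plane (identified with `ℝ × ℝ`)
so that one family of lattice lines is vertical.  Lattice vertices are generated by
`v1 = (√3/2, 1/2)` and `v2 = (0,1)`, anchored so that the bottom vertex of the western
vertical side of the hexagon is at the origin.

The hexagon with side lengths `a, a, 2b, a, a, 2b` (clockwise from the northwestern side)
then has vertices `(0,0)`, `(0,2b)`, `(a√3/2, a/2+2b)`, `(a√3, 2b)`, `(a√3, 0)`,
`(a√3/2, -a/2)`; its center is `(a√3/2, b)` and its horizontal symmetry axis is `y = b`.
-/

noncomputable section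

abbrev Pt : Type := ℝ × ℝ

namespace PP

/-- √3, the ratio of the long diagonal of a unit lozenge to its side. -/
def s3 : ℝ := Real.sqrt 3

/-- The vertices of the triangular lattice (one family of lattice lines vertical). -/
def triLattice : Set Pt :=
  {p | ∃ m n : ℤ, p = ((m : ℝ) * (s3 / 2), (m : ℝ) / 2 + (n : ℝ))}

/-- The six unit vectors along lattice directions. -/
def unitVecs : Set Pt :=
  {(0, 1), (0, -1), (s3 / 2, 1 / 2), (-(s3 / 2), -(1 / 2)),
    (s3 / 2, -(1 / 2)), (-(s3 / 2), 1 / 2)}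

/-- A (unit) lozenge of the triangular lattice: the union of two unit lattice triangles
sharing an edge, i.e. the convex hull of `p, p+u, p+v, p+u+v` for a lattice vertex `p`
and two distinct non-opposite lattice unit vectors `u, v`. -/
def IsLozenge (L : Set Pt) : Prop :=
  ∃ p u v : Pt, p ∈ triLattice ∧ u ∈ unitVecs ∧ v ∈ unitVecs ∧ u ≠ v ∧ u ≠ -v ∧
    L = convexHull ℝ {p, p + u, p + v, p + u + v}

/-- A lozenge tiling of a region `R`: a set of lozenges covering `R` whose interiors
are pairwise disjoint. -/
def IsLozengeTiling (R : Set Pt) (T : Set (Set Pt)) : Prop :=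
  (∀ L ∈ T, IsLozenge L) ∧ ⋃₀ T = R ∧
    ∀ L ∈ T, ∀ L' ∈ T, L ≠ L' → interior L ∩ interior L' = ∅

/-- The hexagon with side lengths `A, A, 2b, A, A, 2b`, clockwise from the NW side. -/
def hexagon (A b : ℕ) : Set Pt :=
  convexHull ℝ
    {((0 : ℝ), (0 : ℝ)), ((0 : ℝ), 2 * (b : ℝ)),
      ((A : ℝ) * (s3 / 2), (A : ℝ) / 2 + 2 * (b : ℝ)),
      ((A : ℝ) * s3, 2 * (b : ℝ)), ((A : ℝ) * s3, (0 : ℝ)),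
      ((A : ℝ) * (s3 / 2), -((A : ℝ) / 2))}

/-- The left-pointing triangular hole of side 2 whose vertical (right) side lies at
distance `2k` (in units of `√3` times half the lattice spacing, i.e. at `x = k√3`)
from the left side of the hexagon, centered on the horizontal symmetry axis `y = b`. -/
def leftHole (b k : ℕ) : Set Pt :=
  convexHull ℝ
    {((k : ℝ) * s3, (b : ℝ) - 1), ((k : ℝ) * s3, (b : ℝ) + 1), (((k : ℝ) - 1) * s3, (b : ℝ))}

/-- The mirror image of `leftHole b k` across the vertical symmetry axis of the hexagon:
a right-pointing triangular hole of side 2. -/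
def rightHole (A b k : ℕ) : Set Pt :=
  convexHull ℝ
    {(((A : ℝ) - k) * s3, (b : ℝ) - 1), (((A : ℝ) - k) * s3, (b : ℝ) + 1),
      (((A : ℝ) - k + 1) * s3, (b : ℝ))}

/-- The region `H_{A,2b}(k_1,…,k_s)`: the hexagon with side lengths `A, A, 2b, A, A, 2b`,
with the (open) triangular holes `leftHole (k i)` and their mirror images removed. -/
def Hreg (A b s : ℕ) (k : Fin s → ℕ) : Set Pt :=
  hexagon A b \ ⋃ i : Fin s, (interior (leftHole b (k i)) ∪ interior (rightHole A b (k i)))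

/-- The horizontal lattice rhombus of side `t` centered at the center `(A√3/2, b)`
of the hexagon. -/
def centralRhombus (A b t : ℕ) : Set Pt :=
  convexHull ℝ
    {((A : ℝ) * (s3 / 2) - (t : ℝ) * (s3 / 2), (b : ℝ)),
      ((A : ℝ) * (s3 / 2) + (t : ℝ) * (s3 / 2), (b : ℝ)),
      ((A : ℝ) * (s3 / 2), (b : ℝ) - (t : ℝ) / 2),
      ((A : ℝ) * (s3 / 2), (b : ℝ) + (t : ℝ) / 2)}

/-- The region `H_{A,2b}(k_1,…,k_s; t)`: `H_{A,2b}(k_1,…,k_s)` with the (open) central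
horizontal rhombus of side `t` also removed. -/
def HregC (A b s : ℕ) (k : Fin s → ℕ) (t : ℕ) : Set Pt :=
  Hreg A b s k \ interior (centralRhombus A b t)

/-- Rotation by `180°` about the center `(A√3/2, b)` of the hexagon. -/
def rot180 (A b : ℕ) (p : Pt) : Pt := ((A : ℝ) * s3 - p.1, 2 * (b : ℝ) - p.2)

/-- Reflection across the vertical symmetry axis `x = A√3/2` of the hexagon. -/
def reflV (A : ℕ) (p : Pt) : Pt := ((A : ℝ) * s3 - p.1, p.2)

/-- A tiling is invariant under rotation by `180°` about the center of the region. -/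
def RotInvariant (A b : ℕ) (T : Set (Set Pt)) : Prop :=
  ∀ L ∈ T, rot180 A b '' L ∈ T

/-- A tiling is invariant under reflection across the vertical symmetry axis. -/
def ReflInvariant (A : ℕ) (T : Set (Set Pt)) : Prop :=
  ∀ L ∈ T, reflV A '' L ∈ T

/-- `M_⊙(R)`: the number of lozenge tilings of `R` invariant under rotation by `180°`
about the center (of the hexagon with parameters `A`, `b` from which `R` was built). -/
def Mrot (A b : ℕ) (R : Set Pt) : ℕ :=
  Nat.card {T : Set (Set Pt) // IsLozengeTiling R T ∧ RotInvariant A b T}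

/-- `M_{⊙,|}(R)`: the number of lozenge tilings of `R` invariant both under rotation by
`180°` about the center and under reflection across the vertical symmetry axis. -/
def MrotRefl (A b : ℕ) (R : Set Pt) : ℕ :=
  Nat.card {T : Set (Set Pt) //
    IsLozengeTiling R T ∧ RotInvariant A b T ∧ ReflInvariant A T}

end PP

/-!
The lozenges in the left half of a rotationally invariant tiling form non-intersecting lattice paths
that start on the left side of the hexagon and on the vertical sides of the holes, and end on the
central vertical line in a set `S` symmetric about the centre; these paths determine the tiling.
Two columns transport the paths by the operator `E⁻¹ + 2 + E`, where `E` is the unit shift, so the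
number of path families ending in `S` is, up to sign, a determinant whose rows are iterates of this
operator on adjacent pairs of point masses. For symmetric `S` it splits into a symmetric and an
antisymmetric factor. The Cauchy–Binet formula sums the product of the two factors over `S`, and
Jacobi's formula turns the resulting minor into the complementary minor of the inverse matrix. Its
rows and columns are indexed by the numbers `q_j - 1` and its entry at `x`, `y` is `1 / (x + y + 1)`
up to factors depending on `x` or `y` only, so that Cauchy's determinant evaluates it to a perfect
square.
-/

namespace HoleyHexagon

section Discrete

open Matrix Finset

section Determinants

variable {R K α m n : Type*} [CommRing R] [Field K]

theorem exists_orderEmb_comp_perm [LinearOrder α] {N : ℕ} {f : Fin N → α}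
    (hf : Function.Injective f) : ∃ (p : Fin N ↪o α) (σ : Equiv.Perm (Fin N)), f = p ∘ σ := by
  have hmono : StrictMono (f ∘ Tuple.sort f) :=
    (Tuple.monotone_sort f).strictMono_of_injective (hf.comp (Tuple.sort f).injective)
  refine ⟨OrderEmbedding.ofStrictMono _ hmono, (Tuple.sort f)⁻¹, funext fun i => ?_⟩
  simp

theorem orderEmb_comp_perm_injective [LinearOrder α] {N : ℕ} :
    Function.Injective fun q : (Fin N ↪o α) × Equiv.Perm (Fin N) => (q.1 ∘ q.2 : Fin N → α) := by
  rintro ⟨p, σ⟩ ⟨p', σ'⟩ (h : ⇑p ∘ ⇑σ = ⇑p' ∘ ⇑σ')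
  obtain rfl : p = p' := by
    apply DFunLike.coe_injective
    apply (StrictMono.range_inj p.strictMono p'.strictMono).1
    rw [← EquivLike.range_comp p σ, ← EquivLike.range_comp p' σ', h]
  congr 1
  exact Equiv.ext fun i => p.injective (congrFun h i)

theorem det_mul_transpose_eq_sum_prod_mul_det [Fintype m] [DecidableEq m] [Fintype n]
    (A B : Matrix m n R) :
    (A * Bᵀ).det = ∑ f : m → n, (∏ i, A i (f i)) * (B.submatrix id f).det := by
  classical
  have hrows : A * Bᵀ = fun i => ∑ k, A i k • fun j => B j k := by
    ext i j
    simp [Matrix.mul_apply]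
  rw [hrows]
  change detRowAlternating _ = _
  rw [← AlternatingMap.coe_multilinearMap, MultilinearMap.map_sum]
  refine sum_congr rfl fun f _ => ?_
  rw [MultilinearMap.map_smul_univ, smul_eq_mul, ← det_transpose]
  rfl

theorem det_mul_transpose_eq_sum_minors [Fintype n] [LinearOrder n] {N : ℕ}
    (A B : Matrix (Fin N) n R) :
    (A * Bᵀ).det =
      ∑ p : Fin N ↪o n, (A.submatrix id p).det * (B.submatrix id p).det := by
  calc (A * Bᵀ).det = ∑ f : Fin N → n, (∏ i, A i (f i)) * (B.submatrix id f).det :=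
        det_mul_transpose_eq_sum_prod_mul_det A B
    _ = ∑ q : (Fin N ↪o n) × Equiv.Perm (Fin N),
          (∏ i, A i (q.1 (q.2 i))) * (B.submatrix id (q.1 ∘ q.2)).det := by
        symm
        refine sum_of_injOn (fun q => q.1 ∘ q.2) orderEmb_comp_perm_injective.injOn (by simp)
          (fun f _ hf => ?_) (by simp)
        have hf' : ¬ Function.Injective f := fun hi => by
          obtain ⟨p, σ, h⟩ := exists_orderEmb_comp_perm hi
          exact hf ⟨(p, σ), by simp, h.symm⟩
        obtain ⟨i, j, hij, hne⟩ := Function.not_injective_iff.1 hf'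
        rw [det_zero_of_column_eq hne fun k => by simp [hij], mul_zero]
    _ = ∑ p : Fin N ↪o n, (A.submatrix id p).det * (B.submatrix id p).det := by
        rw [Fintype.sum_prod_type]
        refine sum_congr rfl fun p _ => ?_
        rw [← det_transpose (A.submatrix id p), det_apply' (A.submatrix id p)ᵀ, sum_mul]
        refine sum_congr rfl fun σ _ => ?_
        rw [show B.submatrix id (p ∘ σ) = (B.submatrix id p).submatrix id σ from rfl,
          det_permute']
        simp only [transpose_apply, submatrix_apply, id]
        ring

theorem det_fromBlocks_swap [Fintype m] [DecidableEq m] (P Q : Matrix m m R) :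
    (fromBlocks P Q Q P).det = (P + Q).det * (P - Q).det := by
  have h : fromBlocks 1 1 0 1 * fromBlocks P Q Q P * fromBlocks 1 (-1) 0 1
      = fromBlocks (P + Q) 0 Q (P - Q) := by
    simp only [fromBlocks_multiply, Matrix.one_mul, Matrix.zero_mul, Matrix.mul_one, zero_add,
      Matrix.mul_zero, add_zero, Matrix.mul_neg, fromBlocks_inj, true_and]
    constructor <;> abel
  simpa using congrArg det h

theorem det_mul_det_toBlocks₂₂_of_mul_eq_one [Fintype m] [DecidableEq m] [Fintype n]
    [DecidableEq n] {M N : Matrix (m ⊕ n) (m ⊕ n) R} (h : M * N = 1) :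
    M.det * N.toBlocks₂₂.det = M.toBlocks₁₁.det := by
  have hprod : M * fromBlocks 1 N.toBlocks₁₂ 0 N.toBlocks₂₂ =
      fromBlocks M.toBlocks₁₁ 0 M.toBlocks₂₁ 1 := by
    rw [← fromBlocks_toBlocks M, ← fromBlocks_toBlocks N, fromBlocks_multiply,
      ← fromBlocks_one, fromBlocks_inj] at h
    conv_lhs => rw [← fromBlocks_toBlocks M]
    rw [fromBlocks_multiply, fromBlocks_inj]
    simp [h]
  simpa using congrArg det hprod

theorem det_submatrix_inl_eq_of_mul_eq_one {p : Type*} [Fintype m] [DecidableEq m] [Fintype n]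
    [DecidableEq n] [Fintype p] [DecidableEq p] {M N : Matrix p p R} (h : M * N = 1)
    (e : m ⊕ n ≃ p) :
    (M.submatrix (fun i => e (.inl i)) fun i => e (.inl i)).det =
      M.det * (N.submatrix (fun i => e (.inr i)) fun i => e (.inr i)).det := by
  have := det_mul_det_toBlocks₂₂_of_mul_eq_one (M := M.submatrix e e) (N := N.submatrix e e)
    (by rw [submatrix_mul_equiv, h, submatrix_one_equiv])
  rw [det_submatrix_equiv_self] at this
  exact this.symm

theorem prod_prod_eq_prod_diag_mul_prod_Ioi [Fintype n] [LinearOrder n]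
    [LocallyFiniteOrderTop n] [LocallyFiniteOrderBot n] {M : Type*} [CommMonoid M]
    (f : n → n → M) :
    ∏ i, ∏ j, f i j = (∏ i, f i i) * ∏ i, ∏ j ∈ Ioi i, f j i * f i j := by
  rw [prod_prod_Ioi_mul_eq_prod_prod_off_diag, ← prod_mul_distrib, prod_comm]
  exact prod_congr rfl fun i _ => Fintype.prod_eq_mul_prod_compl _ _

theorem prod_filter_lt_eq_prod_prod_Ioi [Fintype n] [LinearOrder n] [LocallyFiniteOrderTop n]
    {M : Type*} [CommMonoid M] (f : n × n → M) :
    ∏ p ∈ univ.filter (fun p : n × n => p.1 < p.2), f p = ∏ i, ∏ j ∈ Ioi i, f (i, j) := by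
  rw [prod_filter, Fintype.prod_prod_type]
  refine prod_congr rfl fun i _ => ?_
  rw [← prod_filter]
  exact prod_congr (by ext j; simp) fun _ _ => rfl

theorem det_one_div_add : ∀ {N : ℕ} (x y : Fin N → K), (∀ i j, x i + y j ≠ 0) →
    (Matrix.of fun i j => 1 / (x i + y j)).det =
      (∏ i, ∏ j ∈ Ioi i, (x j - x i) * (y j - y i)) / ∏ i, ∏ j, (x i + y j)
  | 0, _, _, _ => by simp
  | N + 1, x, y, h => by
    have ih := det_one_div_add (fun i => x i.succ) (fun i => y i.succ) fun i j => h _ _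
    -- `B` arises by subtracting from each row the multiple of row `0` that clears its entry in
    -- column `0`.
    let B : Matrix (Fin (N + 1)) (Fin (N + 1)) K := fun i j =>
      if i = 0 then 1 / (x 0 + y j)
      else (x i - x 0) * (y j - y 0) / ((x i + y j) * (x i + y 0) * (x 0 + y j))
    have hdet : (Matrix.of fun i j => 1 / (x i + y j)).det = B.det := by
      refine det_eq_of_forall_row_eq_smul_add_const
        (fun i => if i = 0 then 0 else (x 0 + y 0) / (x i + y 0)) 0 (by simp) fun i j => ?_
      have h1 := h i j
      have h2 := h 0 j
      have h3 := h i 0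
      by_cases hi : i = 0
      · subst hi; simp [B]
      · simp only [of_apply, hi, ↓reduceIte, B]
        field_simp
        ring
    have hminor : B.submatrix (Fin.succAbove 0) Fin.succ = Matrix.of fun i j =>
        ((x i.succ - x 0) / (x i.succ + y 0)) * (Matrix.of (fun i j : Fin N =>
          ((y j.succ - y 0) / (x 0 + y j.succ)) *
            (Matrix.of (fun i j : Fin N => 1 / (x i.succ + y j.succ))) i j)) i j := by
      ext i j
      have h1 := h i.succ j.succ
      have h2 := h 0 j.succ
      have h3 := h i.succ 0
      change B i.succ j.succ = _
      simp only [Fin.succ_ne_zero, ↓reduceIte, of_apply, B]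
      field_simp
    rw [hdet, det_succ_column_zero, Fin.sum_univ_succ,
      sum_eq_zero (s := univ) (f := fun i : Fin N => _) (fun i _ => by simp [B]),
      hminor, det_mul_column, det_mul_row, ih,
      Fin.prod_univ_succ (f := fun i => ∏ j ∈ Ioi i, _),
      Fin.prod_univ_succ (f := fun i => ∏ j, (x i + y j))]
    simp only [Fin.prod_Ioi_zero, Fin.prod_Ioi_succ,
      Fin.prod_univ_succ (f := fun j => (x _ + y j)), prod_div_distrib, prod_mul_distrib]
    simp only [Fin.coe_ofNat_eq_mod, Nat.zero_mod, pow_zero, one_div, ↓reduceIte, one_mul,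
      add_zero, B]
    field_simp

end Determinants

section Kernel

variable {R : Type*} [CommRing R]

/-- The operator `E⁻¹ + 2 + E` on functions `ℤ → R`, where `E` is the unit shift. It is the square
of `stepOp`, recentred so as to commute with the reflection `y ↦ -1 - y`. -/
def doubleStepOp : (ℤ → R) →ₗ[R] (ℤ → R) where
  toFun f y := f (y - 1) + 2 * f y + f (y + 1)
  map_add' f g := by funext y; simp only [Pi.add_apply]; ring
  map_smul' c f := by funext y; simp only [Pi.smul_apply, smul_eq_mul, RingHom.id_apply]; ring

theorem doubleStepOp_apply (f : ℤ → R) (y : ℤ) :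
    doubleStepOp f y = f (y - 1) + 2 * f y + f (y + 1) := rfl

theorem doubleStepOp_single (l : ℤ) :
    doubleStepOp (Pi.single l (1 : R)) =
      Pi.single (l + 1) 1 + (2 : R) • Pi.single l 1 + Pi.single (l - 1) 1 := by
  funext y
  simp only [doubleStepOp_apply, Pi.add_apply, Pi.smul_apply, Pi.single_apply, smul_eq_mul,
    sub_eq_iff_eq_add, eq_sub_iff_add_eq]

/-- `δ_l + σ δ_{-1-l}`: the point mass at `l`, made symmetric (`σ = 1`) or antisymmetric
(`σ = -1`) under the reflection `y ↦ -1 - y`. -/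
def reflSingle (σ : R) (l : ℤ) : ℤ → R := Pi.single l 1 + σ • Pi.single (-1 - l) 1

theorem doubleStepOp_reflSingle (σ : R) (l : ℤ) :
    doubleStepOp (reflSingle σ l) =
      reflSingle σ (l + 1) + (2 : R) • reflSingle σ l + reflSingle σ (l - 1) := by
  simp only [reflSingle, map_add, map_smul, doubleStepOp_single, smul_add, smul_smul,
    mul_comm σ, show -1 - (l + 1) = -1 - l - 1 by ring, show -1 - (l - 1) = -1 - l + 1 by ring]
  abel

theorem reflSingle_neg_one {σ : R} (hσ : σ * σ = 1) :
    reflSingle σ (-1) = σ • reflSingle σ 0 := by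
  simp [reflSingle, smul_smul, hσ, add_comm]

/-- The coordinates of `reflSingle σ l` in the family `doubleStepOp ^ h (reflSingle σ 0)`,
`h = 0, 1, …`; see `reflSingle_eq_sum`. -/
def reflCoeff (σ : R) (l h : ℕ) : R :=
  (-1) ^ (l + h) * ((l + h).choose (2 * h) + (1 + σ) * (l + h).choose (2 * h + 1))

theorem choose_add_two_add_choose (N k : ℕ) :
    (N + 2).choose (k + 2) + N.choose (k + 2) = N.choose k + 2 * (N + 1).choose (k + 2) := by
  simp only [Nat.choose_succ_succ]
  ring

theorem reflCoeff_neg_one (l h : ℕ) :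
    reflCoeff (-1 : R) l h = (-1) ^ (l + h) * (l + h).choose (2 * h) := by
  simp [reflCoeff]

theorem reflCoeff_add_two_succ (σ : R) (l h : ℕ) :
    reflCoeff σ (l + 2) (h + 1) =
      reflCoeff σ (l + 1) h - 2 * reflCoeff σ (l + 1) (h + 1) - reflCoeff σ l (h + 1) := by
  have pascal (k : ℕ) : ((l + h + 1 + 2).choose (k + 2) : R) = (l + h + 1).choose k
      + 2 * (l + h + 1 + 1).choose (k + 2) - (l + h + 1).choose (k + 2) := by
    rw [eq_sub_iff_add_eq]
    simpa using congrArg (Nat.cast (R := R)) (choose_add_two_add_choose (l + h + 1) k)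
  simp only [reflCoeff, show l + 2 + (h + 1) = l + h + 1 + 2 by ring,
    show l + 1 + (h + 1) = l + h + 1 + 1 by ring, show l + (h + 1) = l + h + 1 by ring,
    show l + 1 + h = l + h + 1 by ring, show 2 * (h + 1) = 2 * h + 2 by ring,
    show 2 * h + 2 + 1 = 2 * h + 1 + 2 by ring, pascal]
  ring

theorem reflCoeff_add_two_zero (σ : R) (l : ℕ) :
    reflCoeff σ (l + 2) 0 = -2 * reflCoeff σ (l + 1) 0 - reflCoeff σ l 0 := by
  simp only [reflCoeff, add_zero, mul_zero, Nat.choose_zero_right, zero_add, Nat.choose_one_right]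
  push_cast
  ring

theorem reflCoeff_eq_zero_of_lt (σ : R) {l h : ℕ} (hlh : l < h) : reflCoeff σ l h = 0 := by
  simp [reflCoeff, Nat.choose_eq_zero_of_lt (show l + h < 2 * h by lia),
    Nat.choose_eq_zero_of_lt (show l + h < 2 * h + 1 by lia)]

theorem reflCoeff_self (σ : R) (l : ℕ) : reflCoeff σ l l = 1 := by
  simp [reflCoeff, ← two_mul]

theorem sum_range_reflCoeff_add_two (σ : R) (l N : ℕ) (w : ℕ → ℤ → R)
    (hw : ∀ h, doubleStepOp (w h) = w (h + 1)) :
    ∑ h ∈ range (N + 1), reflCoeff σ (l + 2) h • w h =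
      doubleStepOp (∑ h ∈ range N, reflCoeff σ (l + 1) h • w h)
        - (2 : R) • ∑ h ∈ range (N + 1), reflCoeff σ (l + 1) h • w h
        - ∑ h ∈ range (N + 1), reflCoeff σ l h • w h := by
  simp only [sum_range_succ', map_sum, map_smul, hw, reflCoeff_add_two_succ,
    reflCoeff_add_two_zero, sub_smul, sum_sub_distrib, mul_smul, smul_add, smul_sum, neg_smul,
    neg_mul]
  abel

theorem reflSingle_eq_sum {σ : R} (hσ : σ * σ = 1) (l : ℕ) : ∀ {N : ℕ}, l < N →
    reflSingle σ l =
      ∑ h ∈ range N, reflCoeff σ l h • (doubleStepOp ^ h) (reflSingle σ 0) := by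
  induction l using Nat.twoStepInduction with
  | zero =>
    intro N hN
    rw [sum_eq_single_of_mem 0 (mem_range.2 hN) fun h _ hh => by
      rw [reflCoeff_eq_zero_of_lt σ (Nat.pos_of_ne_zero hh), zero_smul]]
    simp [reflCoeff_self]
  | one =>
    intro N hN
    rw [← sum_subset (range_subset_range.2 hN) fun h _ hh => by
      rw [reflCoeff_eq_zero_of_lt σ (by simpa using hh), zero_smul], sum_range_succ, sum_range_one,
      reflCoeff_self, pow_one, one_smul, doubleStepOp_reflSingle, zero_sub, reflSingle_neg_one hσ]
    simp only [reflCoeff, Nat.cast_one, zero_add, pow_zero, Module.End.one_apply, add_zero,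
      mul_zero, Nat.choose_zero_right, Nat.choose_self, pow_one]
    module
  | more l ih₁ ih₂ =>
    intro N hN
    obtain ⟨N, rfl⟩ : ∃ M, N = M + 1 := ⟨N - 1, by lia⟩
    rw [sum_range_reflCoeff_add_two _ _ _ _ fun h => by rw [pow_succ']; rfl, ← ih₂ (by lia),
      ← ih₂ (by lia), ← ih₁ (by lia), doubleStepOp_reflSingle]
    push_cast
    rw [show (l : ℤ) + 1 + 1 = l + 2 by ring, show (l : ℤ) + 1 - 1 = l by ring]
    abel

/-- The values at `0, …, n - 1` of the functions `doubleStepOp ^ h (reflSingle σ 0)`, `h < n`. -/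
def iterMatrix (n : ℕ) (σ : R) : Matrix (Fin n) (Fin n) R :=
  Matrix.of fun h l => (doubleStepOp ^ (h : ℕ)) (reflSingle σ 0) (l : ℕ)

/-- The matrix of the coefficients `reflCoeff σ l h`, inverse to `iterMatrix n σ`. -/
def coeffMatrix (n : ℕ) (σ : R) : Matrix (Fin n) (Fin n) R :=
  Matrix.of fun l h => reflCoeff σ l h

theorem coeffMatrix_mul_iterMatrix (n : ℕ) {σ : R} (hσ : σ * σ = 1) :
    coeffMatrix n σ * iterMatrix n σ = 1 := by
  ext l l'
  have h := congrFun (reflSingle_eq_sum hσ l l.2) (l' : ℕ)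
  rw [Finset.sum_apply, ← Fin.sum_univ_eq_sum_range
    fun h => (reflCoeff σ l h • (doubleStepOp ^ h) (reflSingle σ 0)) (l' : ℕ)] at h
  simp only [Pi.smul_apply, smul_eq_mul] at h
  simp only [Matrix.mul_apply, coeffMatrix, iterMatrix, of_apply]
  rw [← h]
  simp only [reflSingle, Pi.add_apply, Pi.smul_apply, Pi.single_apply,
    if_neg (show ((l' : ℕ) : ℤ) ≠ -1 - (l : ℕ) by lia), smul_zero, add_zero, Nat.cast_inj,
    Fin.val_inj, Matrix.one_apply, eq_comm]

theorem det_coeffMatrix (n : ℕ) (σ : R) : (coeffMatrix n σ).det = 1 := by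
  rw [det_of_isLowerTriangular (coeffMatrix n σ) fun i j hij => reflCoeff_eq_zero_of_lt σ hij]
  simp [coeffMatrix, reflCoeff_self]

theorem det_iterMatrix (n : ℕ) {σ : R} (hσ : σ * σ = 1) : (iterMatrix n σ).det = 1 := by
  simpa [det_coeffMatrix] using congrArg det (coeffMatrix_mul_iterMatrix n hσ)

theorem prod_prod_add_add_one {t : ℕ} (x : Fin t → R) :
    ∏ i, ∏ j, (x i + x j + 1) =
      (∏ i, (2 * x i + 1)) * (∏ i, ∏ j ∈ Ioi i, (x i + x j + 1)) ^ 2 := by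
  rw [prod_prod_eq_prod_diag_mul_prod_Ioi]
  simp only [add_comm (x _) (x _), prod_mul_distrib, ← two_mul, sq]

end Kernel

section MinorSum

variable {K : Type*} [Field K]

theorem choose_two_mul_succ_mul (n h : ℕ) :
    ((n + h).choose (2 * h + 1) : K) * (2 * h + 1) = (n + h).choose (2 * h) * (n - h) := by
  rcases le_or_gt h n with hn | hn
  · have hsub : ((n - h : ℕ) : K) = n - h := Nat.cast_sub hn
    have := Nat.choose_succ_right_eq (n + h) (2 * h)
    rw [show n + h - 2 * h = n - h by lia] at this
    rw [← hsub]
    simpa using congrArg (Nat.cast (R := K)) this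
  · simp [Nat.choose_eq_zero_of_lt (show n + h < 2 * h by lia),
      Nat.choose_eq_zero_of_lt (show n + h < 2 * h + 1 by lia)]

variable [LinearOrder K] [IsStrictOrderedRing K]

theorem choose_two_mul_succ_eq (n h : ℕ) :
    ((n + h).choose (2 * h + 1) : K) = (n + h).choose (2 * h) * (n - h) / (2 * h + 1) :=
  (eq_div_iff (by positivity)).2 (choose_two_mul_succ_mul n h)

theorem choose_succ_two_mul_succ_eq (n h : ℕ) :
    ((n + 1 + h).choose (2 * h + 1) : K) = (n + h).choose (2 * h) * (n + h + 1) / (2 * h + 1) := by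
  rw [show n + 1 + h = n + h + 1 by ring, Nat.choose_succ_succ, Nat.cast_add,
    choose_two_mul_succ_eq]
  field_simp
  ring

theorem reflCoeff_one (l h : ℕ) :
    reflCoeff (1 : K) l h =
      (-1) ^ (l + h) * ((2 * l + 1) / (2 * h + 1) * (l + h).choose (2 * h)) := by
  rw [reflCoeff, choose_two_mul_succ_eq]
  field_simp
  ring

-- The summand is the difference of consecutive values of the right-hand side.
theorem sum_range_reflCoeff_neg_one_mul_reflCoeff_one (h h' n : ℕ) :
    ∑ l ∈ range n, reflCoeff (-1 : K) l h * reflCoeff 1 l h' =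
      (-1) ^ h * (-1) ^ h' * ((n + h).choose (2 * h + 1) * (n + h').choose (2 * h' + 1)
        * (2 * h + 1) * (1 / (h + h' + 1))) := by
  induction n with
  | zero => simp [Nat.choose_eq_zero_of_lt (show h < 2 * h + 1 by lia)]
  | succ n ih =>
    have hsign : (-1 : K) ^ n * (-1) ^ n = 1 := by rw [← mul_pow]; simp
    rw [sum_range_succ, ih, reflCoeff_neg_one, reflCoeff_one, choose_succ_two_mul_succ_eq,
      choose_succ_two_mul_succ_eq, choose_two_mul_succ_eq, choose_two_mul_succ_eq, pow_add, pow_add]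
    generalize ((n + h).choose (2 * h) : K) = α
    generalize ((n + h').choose (2 * h') : K) = β
    have hterm : (-1 : K) ^ n * (-1) ^ h * α *
        ((-1) ^ n * (-1) ^ h' * ((2 * n + 1) / (2 * h' + 1) * β)) =
        (-1) ^ h * (-1) ^ h' * α * ((2 * n + 1) / (2 * h' + 1) * β) := by
      linear_combination
        ((-1) ^ h * (-1) ^ h' * α * ((2 * n + 1) / (2 * h' + 1) * β)) * hsign
    rw [hterm]
    field_simp
    ring

theorem det_submatrix_coeffMatrix_transpose_mul {n t : ℕ} (c : Fin t → Fin n) :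
    (((coeffMatrix n (-1 : K))ᵀ * coeffMatrix n 1).submatrix c c).det =
      ((∏ i, ((n + c i : ℕ).choose (2 * c i + 1) : K)) *
        ∏ i, ∏ j ∈ Ioi i, (((c j : ℕ) : K) - (c i : ℕ)) / ((c i : ℕ) + (c j : ℕ) + 1)) ^ 2 := by
  have hentry : ((coeffMatrix n (-1 : K))ᵀ * coeffMatrix n 1).submatrix c c =
      Matrix.of fun i i' =>
        ((-1) ^ (c i : ℕ) * ((n + c i : ℕ).choose (2 * c i + 1) : K) * (2 * (c i : ℕ) + 1)) *
          (Matrix.of fun i i' => ((-1) ^ (c i' : ℕ) * ((n + c i' : ℕ).choose (2 * c i' + 1) : K)) *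
            (Matrix.of fun i i' : Fin t =>
              1 / (((c i : ℕ) : K) + (((c i' : ℕ) : K) + 1))) i i') i i' := by
    ext i i'
    have := sum_range_reflCoeff_neg_one_mul_reflCoeff_one (K := K) (c i) (c i') n
    rw [← Fin.sum_univ_eq_sum_range
      fun l => reflCoeff (-1 : K) l (c i) * reflCoeff 1 l (c i')] at this
    simp only [submatrix_apply, Matrix.mul_apply, transpose_apply, coeffMatrix, of_apply, this,
      ← add_assoc]
    ring
  have hne : ∀ i j, ((c i : ℕ) : K) + (((c j : ℕ) : K) + 1) ≠ 0 := fun i j => by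
    exact_mod_cast Nat.succ_ne_zero (c i + c j)
  have hsign : (∏ i, (-1 : K) ^ (c i : ℕ)) * ∏ i, (-1 : K) ^ (c i : ℕ) = 1 := by
    rw [← prod_mul_distrib]
    exact prod_eq_one fun i _ => by rw [← mul_pow]; simp
  have hodd : ∏ i, (2 * ((c i : ℕ) : K) + 1) ≠ 0 := prod_ne_zero_iff.2 fun i _ => by positivity
  have hIoi : ∏ i, ∏ j ∈ Ioi i, (((c i : ℕ) : K) + (c j : ℕ) + 1) ≠ 0 :=
    prod_ne_zero_iff.2 fun i _ => prod_ne_zero_iff.2 fun j _ => by positivity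
  rw [hentry, det_mul_column, det_mul_row, det_one_div_add _ _ hne]
  simp only [← add_assoc, add_sub_add_right_eq_sub, prod_prod_add_add_one, prod_mul_distrib,
    prod_div_distrib]
  field_simp
  linear_combination (∏ i, ((n + c i : ℕ).choose (2 * c i + 1) : K)) ^ 2 *
    (∏ i, ∏ j ∈ Ioi i, (((c j : ℕ) : K) - (c i : ℕ))) ^ 2 * hsign

theorem sum_minors_iterMatrix {n m t : ℕ} (e : Fin m ⊕ Fin t ≃ Fin n) :
    ∑ p : Fin m ↪o Fin n, ((iterMatrix n (1 : K)).submatrix (e ∘ Sum.inl) p).det *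
        ((iterMatrix n (-1)).submatrix (e ∘ Sum.inl) p).det =
      ((∏ i, ((n + e (.inr i) : ℕ).choose (2 * e (.inr i) + 1) : K)) *
        ∏ i, ∏ j ∈ Ioi i, (((e (.inr j) : ℕ) : K) - (e (.inr i) : ℕ)) /
          ((e (.inr i) : ℕ) + (e (.inr j) : ℕ) + 1)) ^ 2 := by
  let G : Matrix (Fin n) (Fin n) K := iterMatrix n 1 * (iterMatrix n (-1))ᵀ
  let L : Matrix (Fin n) (Fin n) K := (coeffMatrix n (-1))ᵀ * coeffMatrix n 1
  have hGL : G * L = 1 := by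
    calc G * L = iterMatrix n 1 * (coeffMatrix n (-1) * iterMatrix n (-1))ᵀ * coeffMatrix n 1 := by
          simp only [G, L, Matrix.mul_assoc, transpose_mul]
      _ = 1 := by
          rw [coeffMatrix_mul_iterMatrix n (by norm_num), transpose_one, Matrix.mul_one,
            mul_eq_one_comm.1 (coeffMatrix_mul_iterMatrix n (by norm_num))]
  have hG : G.det = 1 := by
    rw [det_mul, det_transpose, det_iterMatrix n (by norm_num), det_iterMatrix n (by norm_num),
      one_mul]
  have hJacobi := det_submatrix_inl_eq_of_mul_eq_one hGL e
  rw [hG, one_mul, det_submatrix_coeffMatrix_transpose_mul] at hJacobi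
  rw [← hJacobi]
  exact (det_mul_transpose_eq_sum_minors ((iterMatrix n (1 : K)).submatrix (e ∘ Sum.inl) id)
    ((iterMatrix n (-1)).submatrix (e ∘ Sum.inl) id)).symm

end MinorSum

section Transfer

variable {R : Type*} [CommRing R]

theorem exists_equiv_of_map_univ_val_eq {α β γ : Type*} [Fintype α] [Fintype β] {f : α → γ}
    {g : β → γ} (h : (univ : Finset α).val.map f = (univ : Finset β).val.map g) :
    ∃ e : α ≃ β, ∀ x, g (e x) = f x := by
  classical
  have hfiber (c : γ) : Nonempty ({x // f x = c} ≃ {y // g y = c}) := by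
    rw [← Fintype.card_eq, Fintype.card_subtype, Fintype.card_subtype]
    have hcount := congrArg (Multiset.count c) h
    simp only [Multiset.count_map, eq_comm (a := c)] at hcount
    exact hcount
  let e := fun c => (hfiber c).some
  exact ⟨Equiv.ofFiberEquiv e, Equiv.ofFiberEquiv_map e⟩

theorem univ_val_map_fin_cons {α : Type*} {n : ℕ} (x : α) (v : Fin n → α) :
    (univ : Finset (Fin (n + 1))).val.map (Fin.cons x v : Fin (n + 1) → α) =
      x ::ₘ univ.val.map v := by
  rw [Fin.univ_succ, Finset.cons_val, Finset.map_val, Multiset.map_cons, Multiset.map_map]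
  rfl

theorem det_add_shift_eq_sum {n : Type*} [Fintype n] [DecidableEq n] (v : n → ℤ → R)
    (x : n → ℤ) :
    (Matrix.of fun r s => v r (x s) + v r (x s + 1)).det =
      ∑ t : Finset n, (Matrix.of fun r s => v r (x s + if s ∈ t then 1 else 0)).det := by
  have hcols : (Matrix.of fun r s => v r (x s) + v r (x s + 1))ᵀ =
      (fun s r => v r (x s + 1)) + fun s r => v r (x s) := by
    ext s r
    simp [add_comm]
  rw [← det_transpose, hcols]
  change detRowAlternating _ = _
  rw [AlternatingMap.map_add_univ]
  refine sum_congr rfl fun t _ => ?_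
  rw [← det_transpose]
  change detRowAlternating _ = detRowAlternating _
  congr 1
  funext s r
  by_cases hs : s ∈ t <;> simp [hs]

theorem det_of_row_zero_eq_single {n : ℕ} {M : Matrix (Fin (n + 1)) (Fin (n + 1)) R}
    {p : Fin (n + 1)} (h : M 0 = Pi.single p 1) :
    M.det = (-1) ^ (p : ℕ) * (M.submatrix Fin.succ p.succAbove).det := by
  rw [det_succ_row_zero, sum_eq_single p (fun q _ hq => by simp [h, hq]) (by simp)]
  simp [h]

/-- The operator `f ↦ f + f (· + 1)`, which transports the rows of the determinants counting
families of lattice paths over one unit step of the paths. -/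
def stepOp : (ℤ → R) →ₗ[R] (ℤ → R) where
  toFun f y := f y + f (y + 1)
  map_add' f g := by funext y; simp only [Pi.add_apply]; ring
  map_smul' c f := by funext y; simp only [Pi.smul_apply, smul_eq_mul, RingHom.id_apply]; ring

/-- If `N T` is the number of families of disjoint lattice paths occupying the points `T` at some
time, then `stepCount N S` is the number of those occupying `S` one unit of time later, where each
point `y + 1` or `y` may be followed by `y`; the set `E` consists of the endpoints of the steps from
`y + 1` to `y`. -/
def stepCount (N : Finset ℤ → ℕ) (S : Finset ℤ) : ℕ :=
  ∑ E ∈ S.powerset,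
    if Disjoint (S \ E) (E.image (· + 1)) then N ((S \ E) ∪ E.image (· + 1)) else 0

/-- The effect on the counting function `N` of starting new paths at the points of `D`. -/
def insertCount (D : Finset ℤ) (N : Finset ℤ → ℕ) (S : Finset ℤ) : ℕ :=
  if D ⊆ S then N (S \ D) else 0

variable (R) in
/-- `N S = det (v r (x s))` whenever `x` enumerates `S` in increasing order, where `v` is a fixed
enumeration of the multiset `L`; in particular `N S = 0` unless `S` and `L` have the same size. -/
def IsDeterminantal (N : Finset ℤ → ℕ) (L : Multiset (ℤ → R)) : Prop :=
  ∃ (n : ℕ) (v : Fin n → ℤ → R), (univ : Finset (Fin n)).val.map v = L ∧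
    (∀ x : Fin n → ℤ, StrictMono x →
      (N (univ.image x) : R) = (Matrix.of fun r s => v r (x s)).det) ∧
    ∀ S, S.card ≠ n → N S = 0

theorem strictMono_add_ite_iff {n : Type*} [LinearOrder n] [Fintype n] {x : n → ℤ}
    (hx : StrictMono x) (t : Finset n) :
    StrictMono (fun s => x s + if s ∈ t then 1 else 0) ↔
      Disjoint (univ.image x \ t.image x) ((t.image x).image (· + 1)) := by
  have hdisj : Disjoint (univ.image x \ t.image x) ((t.image x).image (· + 1)) ↔
      ∀ l ∉ t, ∀ k ∈ t, x k + 1 ≠ x l := by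
    simp only [← image_sdiff _ _ hx.injective, disjoint_left, mem_image]
    grind
  rw [hdisj]
  constructor
  · intro hy l hl k hk hkl
    have := hy.injective (a₁ := k) (a₂ := l) (by simp [hk, hl, hkl])
    exact hl (this ▸ hk)
  · intro hd k l hkl
    have hlt := hx hkl
    have := hd l
    dsimp only
    split_ifs with hk hl <;> grind

theorem sdiff_union_image_add_one {n : Type*} [DecidableEq n] [Fintype n] {x : n → ℤ}
    (hx : Function.Injective x) (t : Finset n) :
    univ.image x \ t.image x ∪ (t.image x).image (· + 1) =
      univ.image fun s => x s + if s ∈ t then 1 else 0 := by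
  rw [← image_sdiff _ _ hx, image_image, ← compl_eq_univ_sdiff, ← union_compl t, image_union,
    union_comm]
  congr 1 <;> refine image_congr fun s hs => ?_
  · simp [mem_coe.1 hs]
  · simp [mem_compl.1 (mem_coe.1 hs)]

theorem exists_succAbove_eq_of_eq_add_one {n : ℕ} {x : Fin (n + 2) → ℤ} (hx : StrictMono x)
    {p p' : Fin (n + 2)} (h : x p' = x p + 1) :
    ∃ j : Fin (n + 1), p.succAbove j = p' ∧ (j : ℕ) = p := by
  have hlt : p < p' := hx.lt_iff_lt.1 (by lia)
  have hval : (p' : ℕ) = p + 1 := by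
    by_contra hne
    let r : Fin (n + 2) := ⟨p + 1, by lia⟩
    have h1 : x p < x r := hx (Fin.lt_def.2 (by simp [r]))
    have h2 : x r < x p' := hx (Fin.lt_def.2 (by simp only [r]; lia))
    lia
  refine ⟨⟨p, by lia⟩, ?_, rfl⟩
  rw [Fin.succAbove_of_le_castSucc _ _ (by simp)]
  exact Fin.ext (by simp [hval])

theorem single_comp_eq_single {n : ℕ} {x : Fin n → ℤ} (hx : Function.Injective x) (p : Fin n) :
    (fun s => (Pi.single (x p) 1 : ℤ → R) (x s)) = Pi.single p 1 := by
  funext s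
  simp [Pi.single_apply, hx.eq_iff]

theorem single_apply_eq_zero_of_notMem {n : ℕ} {x : Fin n → ℤ} {m : ℤ}
    (h : m ∉ univ.image x) (s : Fin n) : (Pi.single m 1 : ℤ → R) (x s) = 0 :=
  Pi.single_eq_of_ne (fun hs => h (mem_image.2 ⟨s, mem_univ s, hs⟩)) _

namespace IsDeterminantal

variable {N : Finset ℤ → ℕ} {L : Multiset (ℤ → R)}

theorem step (h : IsDeterminantal R N L) :
    IsDeterminantal R (stepCount N) (L.map stepOp) := by
  obtain ⟨n, v, rfl, hN, hN0⟩ := h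
  refine ⟨n, fun r => stepOp (v r), by rw [Multiset.map_map]; rfl, fun x hx => ?_, fun S hS => ?_⟩
  · have hterm (t : Finset (Fin n)) :
        ((if Disjoint (univ.image x \ t.image x) ((t.image x).image (· + 1)) then
          N (univ.image x \ t.image x ∪ (t.image x).image (· + 1)) else 0 : ℕ) : R) =
          (Matrix.of fun r s => v r (x s + if s ∈ t then 1 else 0)).det := by
      rw [sdiff_union_image_add_one hx.injective]
      split_ifs with hd
      · exact hN _ ((strictMono_add_ite_iff hx t).2 hd)
      · have hmono : Monotone fun s => x s + if s ∈ t then 1 else 0 := by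
          intro k l hkl
          rcases hkl.eq_or_lt with rfl | hkl
          · rfl
          · have := hx hkl
            dsimp only
            split_ifs <;> lia
        have hinj : ¬ Function.Injective fun s => x s + if s ∈ t then 1 else 0 :=
          fun hi => hd ((strictMono_add_ite_iff hx t).1 (hmono.strictMono_of_injective hi))
        obtain ⟨k, l, hkl, hne⟩ := Function.not_injective_iff.1 hinj
        rw [Nat.cast_zero, det_zero_of_column_eq hne fun r => congrArg (v r) hkl]
    calc (stepCount N (univ.image x) : R) =
          ∑ t : Finset (Fin n), (Matrix.of fun r s => v r (x s + if s ∈ t then 1 else 0)).det := by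
          rw [stepCount, powerset_image, powerset_univ, Nat.cast_sum,
            sum_image (image_injective hx.injective).injOn]
          exact sum_congr rfl fun t _ => hterm t
      _ = (Matrix.of fun r s => stepOp (v r) (x s)).det := (det_add_shift_eq_sum v x).symm
  · refine sum_eq_zero fun E hE => ?_
    rw [mem_powerset] at hE
    split_ifs with hd
    · apply hN0
      rwa [card_union_of_disjoint hd, card_image_of_injective _ (add_left_injective 1),
        card_sdiff_add_card_eq_card hE]
    · rfl

theorem insertPair (h : IsDeterminantal R N L) (m : ℤ) :
    IsDeterminantal R (insertCount {m, m + 1} N)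
      (Pi.single m 1 ::ₘ Pi.single (m + 1) 1 ::ₘ L) := by
  obtain ⟨n, v, rfl, hN, hN0⟩ := h
  refine ⟨n + 2, Fin.cons (Pi.single m 1) (Fin.cons (Pi.single (m + 1) 1) v),
    by rw [univ_val_map_fin_cons, univ_val_map_fin_cons], fun x hx => ?_, fun S hS => ?_⟩
  · by_cases hm : {m, m + 1} ⊆ univ.image x
    · simp only [insert_subset_iff, singleton_subset_iff, mem_image, mem_univ, true_and] at hm
      obtain ⟨⟨p, rfl⟩, p', hp'⟩ := hm
      obtain ⟨j, rfl, hj⟩ : ∃ j : Fin (n + 1), p.succAbove j = p' ∧ (j : ℕ) = p :=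
        exists_succAbove_eq_of_eq_add_one hx hp'
      have hx' := hx.comp (Fin.strictMono_succAbove p)
      have himage : univ.image x \ {x p, x p + 1} =
          univ.image ((x ∘ p.succAbove) ∘ j.succAbove) := by
        rw [← hp', ← image_image, ← image_image, Fin.image_succAbove_univ, compl_eq_univ_sdiff,
          image_sdiff _ _ p.succAbove_right_injective, Fin.image_succAbove_univ,
          image_sdiff _ _ hx.injective, compl_eq_univ_sdiff, image_sdiff _ _ hx.injective]
        simp only [image_singleton, sdiff_sdiff_left]
        rfl
      have hpair : {x p, x p + 1} ⊆ univ.image x := by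
        simp [insert_subset_iff, ← hp']
      rw [insertCount, if_pos hpair, himage, hN _ (hx'.comp (Fin.strictMono_succAbove j)),
        det_of_row_zero_eq_single (single_comp_eq_single hx.injective p),
        det_of_row_zero_eq_single (p := j), hj, ← mul_assoc, ← mul_pow, neg_one_mul, neg_neg,
        one_pow, one_mul]
      · rfl
      · rw [← hp']
        exact single_comp_eq_single hx'.injective j
    · rw [insertCount, if_neg hm, Nat.cast_zero]
      rw [insert_subset_iff, singleton_subset_iff, not_and_or] at hm
      rcases hm with hm | hm
      · exact (det_eq_zero_of_row_eq_zero 0 (single_apply_eq_zero_of_notMem hm)).symm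
      · exact (det_eq_zero_of_row_eq_zero 1 (single_apply_eq_zero_of_notMem hm)).symm
  · unfold insertCount
    split_ifs with hm
    · apply hN0
      have hcard := card_sdiff_add_card_eq_card hm
      rw [card_pair (by lia)] at hcard
      lia
    · rfl

end IsDeterminantal

end Transfer

section PathCount

variable {R : Type*} [CommRing R]

variable (R) in
/-- The function `doubleStepOp ^ j (δ_e)`, translated by `c`. The rows of the determinants counting
the path families have this form with `e = 0` or `e = -1`. -/
def pathRow (c e : ℤ) (j : ℕ) (y : ℤ) : R := (doubleStepOp ^ j) (Pi.single e 1) (y - c)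

theorem pathRow_zero (c e : ℤ) : pathRow R c e 0 = Pi.single (c + e) 1 := by
  funext y
  simp [pathRow, Pi.single_apply, sub_eq_iff_eq_add']

theorem stepOp_stepOp_pathRow (c e : ℤ) (j : ℕ) :
    stepOp (stepOp (pathRow R c e j)) = pathRow R (c - 1) e (j + 1) := by
  funext y
  simp only [stepOp, pathRow, LinearMap.coe_mk, AddHom.coe_mk, pow_succ', Module.End.mul_apply,
    doubleStepOp_apply]
  ring_nf

theorem doubleStepOp_pow_reflect (f : ℤ → R) (j : ℕ) (y : ℤ) :
    (doubleStepOp ^ j) (fun z => f (-1 - z)) y = (doubleStepOp ^ j) f (-1 - y) := by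
  induction j generalizing y with
  | zero => rfl
  | succ j ih =>
    simp only [pow_succ', Module.End.mul_apply, doubleStepOp_apply, ih]
    ring_nf

theorem doubleStepOp_pow_reflSingle (σ : R) (j : ℕ) (y : ℤ) :
    (doubleStepOp ^ j) (reflSingle σ 0) y =
      (doubleStepOp ^ j) (Pi.single 0 1) y + σ * (doubleStepOp ^ j) (Pi.single 0 1) (-1 - y) := by
  have hrefl : reflSingle σ 0 =
      Pi.single 0 1 + σ • fun z : ℤ => (Pi.single 0 1 : ℤ → R) (-1 - z) := by
    funext z
    simp only [reflSingle, Pi.add_apply, Pi.smul_apply, Pi.single_apply]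
    congr 3
    grind
  rw [hrefl, map_add, map_smul, Pi.add_apply, Pi.smul_apply, doubleStepOp_pow_reflect, smul_eq_mul]

theorem pathRow_neg_one (c : ℤ) (j : ℕ) (y : ℤ) :
    pathRow R c (-1) j y = pathRow R c 0 j (2 * c - 1 - y) := by
  have hrefl : (Pi.single (-1) 1 : ℤ → R) = fun z => (Pi.single 0 1 : ℤ → R) (-1 - z) := by
    funext z
    simp only [Pi.single_apply]
    congr 1
    grind
  rw [pathRow, hrefl, doubleStepOp_pow_reflect, pathRow]
  ring_nf

theorem pathRow_eq_zero {c e : ℤ} {j : ℕ} (he : e = 0 ∨ e = -1) {y : ℤ}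
    (hy : y ∉ Ico (c - 1 - j) (c + 1 + j)) : pathRow R c e j y = 0 := by
  induction j generalizing c y with
  | zero =>
    rw [pathRow_zero, Pi.single_eq_of_ne]
    grind
  | succ j ih =>
    have hc : c = c + 1 - 1 := by ring
    rw [hc, ← stepOp_stepOp_pathRow]
    simp only [stepOp, LinearMap.coe_mk, AddHom.coe_mk]
    rw [mem_Ico] at hy
    rw [ih, ih, ih] <;> grind

section Mirror

variable {m : ℕ}

/-- The indexing of `Fin (m + m)` in which the second copy of `Fin m` comes first, reversed. -/
def mirrorEquiv (m : ℕ) : Fin m ⊕ Fin m ≃ Fin (m + m) :=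
  (Equiv.sumComm _ _).trans ((Equiv.sumCongr Fin.revPerm (Equiv.refl _)).trans finSumFinEquiv)

/-- The points `c + p i` together with their mirror images `c - 1 - p i`; they are listed in
increasing order when `p` is increasing. -/
def mirror (c : ℤ) (p : Fin m → ℕ) : Fin (m + m) → ℤ :=
  Sum.elim (fun i => c + p i) (fun i => c - 1 - p i) ∘ (mirrorEquiv m).symm

theorem strictMono_eq_of_image_univ_eq {n : ℕ} {x y : Fin n → ℤ} (hx : StrictMono x)
    (hy : StrictMono y) (h : univ.image x = univ.image y) : x = y :=
  (hx.range_inj hy).1 (by simpa [← coe_inj] using h)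

theorem strictMono_mirror (c : ℤ) {p : Fin m → ℕ} (hp : StrictMono p) :
    StrictMono (mirror c p) := by
  intro y z hyz
  obtain ⟨y, rfl⟩ := (mirrorEquiv m).surjective y
  obtain ⟨z, rfl⟩ := (mirrorEquiv m).surjective z
  simp only [mirror, Function.comp_apply, Equiv.symm_apply_apply]
  rcases y with i | i <;> rcases z with k | k <;>
    simp only [mirrorEquiv, Equiv.trans_apply, Equiv.sumComm_apply, Sum.swap_inl, Sum.swap_inr,
      Equiv.sumCongr_apply, Sum.map_inl, Sum.map_inr, finSumFinEquiv_apply_left,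
      finSumFinEquiv_apply_right, Fin.lt_def, Fin.val_natAdd, Fin.val_castAdd, Equiv.refl_apply,
      Fin.revPerm_apply, Fin.val_rev, Sum.elim_inl, Sum.elim_inr] at hyz ⊢
  · have := hp (Fin.lt_def.2 (by lia : (i : ℕ) < k))
    lia
  · lia
  · lia
  · have := hp (Fin.lt_def.2 (by lia : (k : ℕ) < i))
    lia

theorem mem_image_mirror {c y : ℤ} {p : Fin m → ℕ} :
    y ∈ univ.image (mirror c p) ↔ ∃ i, y = c + p i ∨ y = c - 1 - p i := by
  simp only [mirror, mem_image, mem_univ, true_and, (mirrorEquiv m).surjective.exists,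
    Function.comp_apply, Equiv.symm_apply_apply, Sum.exists, Sum.elim_inl, Sum.elim_inr, exists_or,
    eq_comm (a := y)]

theorem image_mirror_val (b : ℕ) :
    univ.image (mirror b fun i : Fin b => (i : ℕ)) = Ico (0 : ℤ) (2 * b) := by
  ext y
  rw [mem_image_mirror, mem_Ico, Fin.exists_iff]
  constructor
  · rintro ⟨i, hi, h⟩
    lia
  · intro h
    rcases le_or_gt (b : ℤ) y with hy | hy
    · exact ⟨(y - b).toNat, by lia, Or.inl (by lia)⟩
    · exact ⟨(b - 1 - y).toNat, by lia, Or.inr (by lia)⟩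

/-- The subsets of `[c - n, c + n)` that are invariant under the reflection `y ↦ 2 c - 1 - y`. -/
def symmetricSets (c : ℤ) (n : ℕ) : Finset (Finset ℤ) :=
  (Ico (c - n) (c + n)).powerset.filter fun S => ∀ y ∈ S, 2 * c - 1 - y ∈ S

theorem image_mirror_mem_symmetricSets (c : ℤ) {n : ℕ} (p : Fin m → Fin n) :
    univ.image (mirror c fun i => p i) ∈ symmetricSets c n := by
  simp only [symmetricSets, mem_filter, mem_powerset, subset_iff, mem_image_mirror, mem_Ico]
  grind

theorem exists_image_mirror_eq {c : ℤ} {n : ℕ} {S : Finset ℤ} (hS : S ∈ symmetricSets c n) :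
    ∃ (m : ℕ) (p : Fin m ↪o Fin n), univ.image (mirror c fun i => p i) = S := by
  let P : Finset (Fin n) := univ.filter fun x => c + (x : ℕ) ∈ S
  simp only [symmetricSets, mem_filter, mem_powerset, subset_iff, mem_Ico] at hS
  obtain ⟨hsub, hsym⟩ := hS
  have hmem (l : Fin n) : (∃ i, P.orderEmbOfFin rfl i = l) ↔ c + (l : ℕ) ∈ S := by
    rw [← Set.mem_range, range_orderEmbOfFin]
    simp [P]
  refine ⟨_, P.orderEmbOfFin rfl, ext fun y => ?_⟩
  rw [mem_image_mirror]
  constructor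
  · rintro ⟨i, rfl | rfl⟩
    · exact (hmem _).1 ⟨i, rfl⟩
    · convert hsym _ ((hmem _).1 ⟨i, rfl⟩) using 1
      ring
  · intro hy
    have hbounds := hsub hy
    rcases le_or_gt c y with hc | hc
    · obtain ⟨i, hi⟩ := (hmem ⟨(y - c).toNat, by lia⟩).2 (by convert hy using 1; grind)
      exact ⟨i, Or.inl (by grind)⟩
    · obtain ⟨i, hi⟩ := (hmem ⟨(c - 1 - y).toNat, by lia⟩).2 (by
        convert hsym y hy using 1; grind)
      exact ⟨i, Or.inr (by grind)⟩

theorem sum_symmetricSets_eq_sum_mirror {M : Type*} [AddCommMonoid M] (c : ℤ) (n : ℕ)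
    {f : Finset ℤ → M} (hf : ∀ S, S.card ≠ m + m → f S = 0) :
    ∑ S ∈ symmetricSets c n, f S =
      ∑ p : Fin m ↪o Fin n, f (univ.image (mirror c fun i => p i)) := by
  refine (sum_of_injOn (fun p : Fin m ↪o Fin n => univ.image (mirror c fun i => p i)) ?_
    (fun p _ => image_mirror_mem_symmetricSets c p) ?_ fun _ _ => rfl).symm
  · intro p _ p' _ h
    have heq := strictMono_eq_of_image_univ_eq (strictMono_mirror c p.strictMono)
      (strictMono_mirror c p'.strictMono) h
    refine DFunLike.ext _ _ fun i => Fin.ext ?_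
    simpa [mirror] using congrFun heq (mirrorEquiv m (Sum.inl i))
  · intro S hS hS'
    obtain ⟨m', p, rfl⟩ := exists_image_mirror_eq hS
    refine hf _ fun hcard => hS' ?_
    rw [card_image_of_injective _ (strictMono_mirror c p.strictMono).injective, card_univ,
      Fintype.card_fin] at hcard
    obtain rfl : m' = m := by lia
    exact ⟨p, mem_coe.2 (mem_univ p), rfl⟩

theorem det_pathRow_mirror (c : ℤ) {n : ℕ} (j p : Fin m → Fin n) :
    (Matrix.of fun r s : Fin m ⊕ Fin m =>
        Sum.elim (fun i => pathRow R c 0 (j i)) (fun i => pathRow R c (-1) (j i)) r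
          (mirror c (fun i => p i) (mirrorEquiv m s))).det =
      ((iterMatrix n (1 : R)).submatrix j p).det * ((iterMatrix n (-1)).submatrix j p).det := by
  let P : Matrix (Fin m) (Fin m) R :=
    Matrix.of fun i k => (doubleStepOp ^ (j i : ℕ)) (Pi.single 0 1) (p k : ℕ)
  let Q : Matrix (Fin m) (Fin m) R :=
    Matrix.of fun i k => (doubleStepOp ^ (j i : ℕ)) (Pi.single 0 1) (-1 - (p k : ℕ))
  have hblocks : (Matrix.of fun r s : Fin m ⊕ Fin m =>
        Sum.elim (fun i => pathRow R c 0 (j i)) (fun i => pathRow R c (-1) (j i)) r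
          (mirror c (fun i => p i) (mirrorEquiv m s))) = fromBlocks P Q Q P := by
    ext (i | i) (k | k) <;> simp [mirror, P, Q, pathRow_neg_one] <;> simp only [pathRow] <;> ring_nf
  rw [hblocks, det_fromBlocks_swap]
  congr 2 <;> ext i k <;> simp [P, Q, iterMatrix, doubleStepOp_pow_reflSingle, sub_eq_add_neg]

end Mirror

variable (R) in
/-- The rows of the determinant counting a path family: two for each exponent in `J`. -/
def pathRows (c : ℤ) (J : Finset ℕ) : Multiset (ℤ → R) :=
  J.val.map (pathRow R c 0) + J.val.map (pathRow R c (-1))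

theorem univ_val_map_sum_elim_pathRow {m : ℕ} (c : ℤ) {j : Fin m → ℕ}
    (hj : Function.Injective j) :
    (univ : Finset (Fin m ⊕ Fin m)).val.map
        (Sum.elim (fun i => pathRow R c 0 (j i)) fun i => pathRow R c (-1) (j i)) =
      pathRows R c (univ.image j) := by
  rw [pathRows, image_val_of_injOn hj.injOn, Multiset.map_map, Multiset.map_map,
    ← univ_disjSum_univ, val_disjSum, Multiset.disjSum, Multiset.map_add, Multiset.map_map,
    Multiset.map_map]
  rfl

theorem map_stepOp_stepOp_pathRows (c : ℤ) (J : Finset ℕ) :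
    ((pathRows R c J).map stepOp).map stepOp = pathRows R (c - 1) (J.image Nat.succ) := by
  simp only [pathRows, Multiset.map_add, Multiset.map_map, Function.comp_apply,
    image_val_of_injOn Nat.succ_injective.injOn, stepOp_stepOp_pathRow]

theorem pathRows_insert_zero (c : ℤ) {J : Finset ℕ} (hJ : 0 ∉ J) :
    pathRows R c (insert 0 J) =
      Pi.single (c - 1) 1 ::ₘ Pi.single (c - 1 + 1) 1 ::ₘ pathRows R c J := by
  simp only [pathRows, insert_val_of_notMem hJ, Multiset.map_cons, pathRow_zero,
    Multiset.cons_add, Multiset.add_cons, sub_add_cancel, add_zero, ← sub_eq_add_neg]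

theorem IsDeterminantal.exists_sign_mul_eq {N : Finset ℤ → ℕ} {c : ℤ} {m n : ℕ} {j : Fin m → Fin n}
    (hj : Function.Injective j)
    (h : IsDeterminantal R N (pathRows R c (univ.image fun i => (j i : ℕ)))) :
    (∃ ε : ℤˣ, ∀ p : Fin m ↪o Fin n, (N (univ.image (mirror c fun i => p i)) : R) =
      ((ε : ℤ) : R) * (((iterMatrix n (1 : R)).submatrix j p).det *
        ((iterMatrix n (-1)).submatrix j p).det)) ∧
      ∀ S, S.card ≠ m + m → N S = 0 := by
  obtain ⟨n', v, hv, hN, hN0⟩ := h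
  obtain ⟨g, hg⟩ := exists_equiv_of_map_univ_val_eq
    (hv.trans (univ_val_map_sum_elim_pathRow c (Fin.val_injective.comp hj)).symm)
  obtain rfl : n' = m + m := by simpa using Fintype.card_congr g
  refine ⟨⟨Equiv.Perm.sign (g.trans (mirrorEquiv m)), fun p => ?_⟩, hN0⟩
  rw [hN _ (strictMono_mirror c p.strictMono), ← det_pathRow_mirror c j p,
    ← det_submatrix_equiv_self (mirrorEquiv m).symm, ← det_permute]
  congr 1
  ext r s
  simp [← hg r]

theorem isDeterminantal_Ico (b : ℕ) :
    IsDeterminantal R (fun S => if S = Ico (0 : ℤ) (2 * b) then 1 else 0)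
      (pathRows R b (range b)) := by
  let w : Fin b ⊕ Fin b → ℤ → R :=
    Sum.elim (fun i => pathRow R b 0 i) fun i => pathRow R b (-1) i
  have hw : (univ : Finset (Fin b ⊕ Fin b)).val.map w = pathRows R b (range b) := by
    rw [univ_val_map_sum_elim_pathRow b Fin.val_injective]
    congr 1
    ext j
    simp [Fin.exists_iff]
  have hmono := strictMono_mirror b (fun i k hik => hik : StrictMono fun i : Fin b => (i : ℕ))
  refine ⟨b + b, w ∘ (mirrorEquiv b).symm, ?_, fun x hx => ?_, fun S hS => if_neg ?_⟩
  · rw [← hw, ← Multiset.map_map]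
    congr 1
    exact congrArg val (map_univ_equiv (mirrorEquiv b).symm)
  · by_cases h : univ.image x = Ico (0 : ℤ) (2 * b)
    · obtain rfl := strictMono_eq_of_image_univ_eq hx hmono (h.trans (image_mirror_val b).symm)
      have hdet := det_pathRow_mirror (R := R) b (id : Fin b → Fin b) id
      rw [submatrix_id_id, submatrix_id_id, det_iterMatrix b (by ring),
        det_iterMatrix b (by ring)] at hdet
      beta_reduce
      rw [← det_submatrix_equiv_self (mirrorEquiv b), if_pos h, Nat.cast_one, ← mul_one 1, ← hdet]
      congr 1
      ext r s
      simp [w]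
    · obtain ⟨s, hs⟩ : ∃ s, x s ∉ Ico (0 : ℤ) (2 * b) := by
        by_contra! hsub
        refine h (eq_of_subset_of_card_le (image_subset_iff.2 fun s _ => hsub s) ?_)
        rw [card_image_of_injective _ hx.injective, Int.card_Ico, card_univ, Fintype.card_fin]
        lia
      beta_reduce
      rw [if_neg h, Nat.cast_zero, det_eq_zero_of_column_eq_zero s fun r => ?_]
      rw [of_apply, Function.comp_apply]
      rcases (mirrorEquiv b).symm r with i | i <;> have := i.is_lt <;>
        exact pathRow_eq_zero (by simp) (by rw [mem_Ico] at hs ⊢; lia)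
  · rintro rfl
    rw [Int.card_Ico] at hS
    lia

theorem insertCount_empty (N : Finset ℤ → ℕ) : insertCount ∅ N = N := by
  funext S
  simp [insertCount]

/-- The dent at time `i`: at time `2 h`, `h ∈ K`, new paths start at `b - h - 1` and `b - h`, the
two points of the vertical side of the hole at distance `2 h`. -/
def dent (b : ℕ) (K : Finset ℕ) (i : ℕ) : Finset ℤ :=
  if i % 2 = 0 ∧ i / 2 ∈ K then {(b : ℤ) - (i / 2 : ℕ) - 1, (b : ℤ) - (i / 2 : ℕ)} else ∅

/-- `pathCount b K i S` is the number of families of disjoint paths that start at the points of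
`[0, 2b)` at time `0` and at the points of `dent b K h` at times `0 < h ≤ i`, and that occupy
exactly `S` at time `i`. -/
def pathCount (b : ℕ) (K : Finset ℕ) : ℕ → Finset ℤ → ℕ
  | 0 => fun S => if S = Ico (0 : ℤ) (2 * b) then 1 else 0
  | i + 1 => insertCount (dent b K (i + 1)) (stepCount (pathCount b K i))

/-- The exponents of the rows for the paths present at time `2 t`: a pair of paths started at time
`2 h` has exponent `t - h`, and the `2 b` initial paths behave as pairs started at the times
`0, -2, …, -2 (b - 1)`. -/
def pathExponents (b : ℕ) (K : Finset ℕ) (t : ℕ) : Finset ℕ :=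
  (range (t + b)).filter fun j => t ≤ j ∨ t - j ∈ K

theorem pathExponents_succ_of_mem {b : ℕ} {K : Finset ℕ} {t : ℕ} (ht : t + 1 ∈ K) :
    pathExponents b K (t + 1) = insert 0 ((pathExponents b K t).image Nat.succ) := by
  ext (_ | j)
  · simp [pathExponents, ht]
  · simp [pathExponents, Nat.add_right_comm]

theorem pathExponents_succ_of_notMem {b : ℕ} {K : Finset ℕ} {t : ℕ} (ht : t + 1 ∉ K) :
    pathExponents b K (t + 1) = (pathExponents b K t).image Nat.succ := by
  ext (_ | j)
  · simp [pathExponents, ht]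
  · simp [pathExponents, Nat.add_right_comm]

theorem isDeterminantal_pathCount (b : ℕ) (K : Finset ℕ) (t : ℕ) :
    IsDeterminantal R (pathCount b K (2 * t)) (pathRows R ((b : ℤ) - t) (pathExponents b K t)) := by
  induction t with
  | zero =>
    have hexp : pathExponents b K 0 = range b := by simp [pathExponents]
    rw [hexp, Nat.cast_zero, sub_zero]
    exact isDeterminantal_Ico b
  | succ t ih =>
    have hodd : dent b K (2 * t + 1) = ∅ := if_neg (by lia)
    have hdouble : IsDeterminantal R (stepCount (pathCount b K (2 * t + 1)))
        (pathRows R ((b : ℤ) - t - 1) ((pathExponents b K t).image Nat.succ)) := by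
      rw [pathCount, hodd, insertCount_empty, ← map_stepOp_stepOp_pathRows]
      exact ih.step.step
    have hdiv : (2 * t + 1 + 1) / 2 = t + 1 := by lia
    have hcast : (b : ℤ) - (t + 1 : ℕ) = b - t - 1 := by push_cast; ring
    rw [mul_add_one, pathCount, dent, hdiv, hcast]
    by_cases ht : t + 1 ∈ K
    · rw [if_pos ⟨by lia, ht⟩, pathExponents_succ_of_mem ht, pathRows_insert_zero _ (by simp)]
      simpa using hdouble.insertPair ((b : ℤ) - t - 1 - 1)
    · rwa [if_neg (fun h => ht h.2), insertCount_empty, pathExponents_succ_of_notMem ht]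

theorem sum_pathCount_symmetricSets {a b m t : ℕ} {K : Finset ℕ} (e : Fin m ⊕ Fin t ≃ Fin (a + b))
    (he : univ.image (fun i => (e (.inl i) : ℕ)) = pathExponents b K a) :
    ((∑ S ∈ symmetricSets ((b : ℤ) - a) (a + b), pathCount b K (2 * a) S : ℕ) : ℚ) =
      ((∏ i, ((a + b + e (.inr i) : ℕ).choose (2 * e (.inr i) + 1) : ℚ)) *
        ∏ i, ∏ j ∈ Ioi i, (((e (.inr j) : ℕ) : ℚ) - (e (.inr i) : ℕ)) /
          ((e (.inr i) : ℕ) + (e (.inr j) : ℕ) + 1)) ^ 2 := by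
  have hdet := isDeterminantal_pathCount (R := ℚ) b K a
  rw [← he] at hdet
  obtain ⟨⟨ε, hε⟩, hcard⟩ :=
    hdet.exists_sign_mul_eq (j := e ∘ Sum.inl) (e.injective.comp Sum.inl_injective)
  rw [← sum_minors_iterMatrix e]
  have hsum := calc
    ((∑ S ∈ symmetricSets ((b : ℤ) - a) (a + b), pathCount b K (2 * a) S : ℕ) : ℚ)
    _ = (ε : ℤ) * ∑ p : Fin m ↪o Fin (a + b),
          ((iterMatrix (a + b) (1 : ℚ)).submatrix (e ∘ Sum.inl) p).det *
            ((iterMatrix (a + b) (-1)).submatrix (e ∘ Sum.inl) p).det := by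
      rw [sum_symmetricSets_eq_sum_mirror _ _ hcard, Nat.cast_sum, sum_congr rfl fun p _ => hε p,
        mul_sum]
  rcases Int.units_eq_one_or ε with rfl | rfl
  · simpa using hsum
  · have hsq := sum_minors_iterMatrix (K := ℚ) e ▸ sq_nonneg _
    have hcount : (0 : ℚ) ≤ (∑ S ∈ symmetricSets ((b : ℤ) - a) (a + b),
      pathCount b K (2 * a) S : ℕ) := Nat.cast_nonneg _
    simp only [Units.val_neg, Units.val_one, Int.cast_neg, Int.cast_one] at hsum
    linarith only [hsum, hcount, hsq]

end PathCount

/-- A family of lattice paths recorded column by column: `occupied n` are the heights of the paths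
at time `n`, and `descents n` the heights of the endpoints, at time `n + 1`, of the down steps
between the times `n` and `n + 1`. Time increases towards the centre of the hexagon. -/
@[ext]
structure PathFamily where
  occupied : ℕ → Finset ℤ
  descents : ℕ → Finset ℤ

/-- `X` and `Y` are the heights at consecutive times of non-intersecting paths whose down steps end
in `F`, when new paths start at the heights `D` of the later time. -/
def IsStep (D X Y F : Finset ℤ) : Prop :=
  D ⊆ Y ∧ F ⊆ Y \ D ∧ Disjoint ((Y \ D) \ F) (F.image (· + 1)) ∧
    X = ((Y \ D) \ F) ∪ F.image (· + 1)

theorem mem_image_add_one {F : Finset ℤ} {j : ℤ} : j ∈ F.image (· + 1) ↔ j - 1 ∈ F := by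
  simp only [mem_image]
  exact ⟨fun ⟨y, hy, hyj⟩ => by rwa [← hyj, add_sub_cancel_right], fun h => ⟨j - 1, h, by simp⟩⟩

theorem isStep_iff {D X Y F : Finset ℤ} :
    IsStep D X Y F ↔ ∀ j, (j ∈ D → j ∈ Y) ∧ (j ∈ F → j ∈ Y ∧ j ∉ D) ∧
      ¬ ((j ∈ Y ∧ j ∉ D ∧ j ∉ F) ∧ j - 1 ∈ F) ∧
      (j ∈ X ↔ (j ∈ Y ∧ j ∉ D ∧ j ∉ F) ∨ j - 1 ∈ F) := by
  simp only [IsStep, disjoint_left, Finset.ext_iff, subset_iff, mem_union, mem_sdiff,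
    mem_image_add_one]
  exact ⟨fun ⟨hD, hF, hdisj, hX⟩ j => ⟨@hD j, @hF j, fun h => hdisj (and_assoc.mpr h.1) h.2,
      (hX j).trans (by rw [and_assoc])⟩,
    fun h => ⟨fun j => (h j).1, fun j => (h j).2.1,
      fun j hj hj' => (h j).2.2.1 ⟨and_assoc.mp hj, hj'⟩,
      fun j => (h j).2.2.2.trans (by rw [and_assoc])⟩⟩

/-- The path families of duration `i` starting from the left side of the hexagon and the dents,
and ending at the heights `S`. The data after time `i` are set to `∅` so that they carry no
information. -/
structure IsPathFamily (b : ℕ) (K : Finset ℕ) (i : ℕ) (S : Finset ℤ) (d : PathFamily) : Prop where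
  occupied_of_lt : ∀ n, i < n → d.occupied n = ∅
  descents_of_le : ∀ n, i ≤ n → d.descents n = ∅
  occupied_zero : d.occupied 0 = Ico (0 : ℤ) (2 * b)
  occupied_last : d.occupied i = S
  isStep : ∀ n < i, IsStep (dent b K (n + 1)) (d.occupied n) (d.occupied (n + 1)) (d.descents n)

namespace PathFamily

open Function (update update_self update_of_ne)

/-- Append the positions `S` at time `i + 1`, reached through the down steps `E`. -/
def extend (i : ℕ) (S : Finset ℤ) (x : (_ : Finset ℤ) × PathFamily) : PathFamily :=
  ⟨update x.2.occupied (i + 1) S, update x.2.descents i x.1⟩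

/-- Split off the last step of a path family of duration `i + 1`. -/
def truncate (i : ℕ) (d : PathFamily) : (_ : Finset ℤ) × PathFamily :=
  ⟨d.descents i, ⟨update d.occupied (i + 1) ∅, update d.descents i ∅⟩⟩

end PathFamily

open PathFamily

section Count

variable {b : ℕ} {K : Finset ℕ} {i : ℕ} {S : Finset ℤ}

open Function (update update_self update_of_ne)

theorem IsPathFamily.truncate_extend {T E : Finset ℤ} {d : PathFamily}
    (h : IsPathFamily b K i T d) : truncate i (extend i S ⟨E, d⟩) = ⟨E, d⟩ := by
  simp only [truncate, extend, update_self, Function.update_idem]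
  congr 2
  · rw [← h.occupied_of_lt (i + 1) i.lt_succ_self, Function.update_eq_self]
  · rw [← h.descents_of_le i le_rfl, Function.update_eq_self]

theorem IsPathFamily.extend_truncate {d : PathFamily} (h : IsPathFamily b K (i + 1) S d) :
    extend i S (truncate i d) = d := by
  simp [truncate, extend, ← h.occupied_last]

theorem IsPathFamily.truncate {d : PathFamily} (h : IsPathFamily b K (i + 1) S d) :
    IsPathFamily b K i (d.occupied i) (truncate i d).2 where
  occupied_of_lt n hn := by
    rcases eq_or_ne n (i + 1) with rfl | hne
    · exact update_self ..
    · exact (update_of_ne hne ..).trans (h.occupied_of_lt n (by omega))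
  descents_of_le n hn := by
    rcases eq_or_ne n i with rfl | hne
    · exact update_self ..
    · exact (update_of_ne hne ..).trans (h.descents_of_le n (by omega))
  occupied_zero := (update_of_ne i.succ_ne_zero.symm ∅ d.occupied).trans h.occupied_zero
  occupied_last := update_of_ne i.lt_succ_self.ne ..
  isStep n hn := by
    simpa only [PathFamily.truncate, update_of_ne (show n ≠ i + 1 by omega),
      update_of_ne (show n + 1 ≠ i + 1 by omega), update_of_ne hn.ne] using h.isStep n (by omega)

theorem IsPathFamily.extend {T E : Finset ℤ} {d : PathFamily} (h : IsPathFamily b K i T d)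
    (hE : IsStep (dent b K (i + 1)) T S E) :
    IsPathFamily b K (i + 1) S (extend i S ⟨E, d⟩) where
  occupied_of_lt n hn := (update_of_ne (by omega) ..).trans (h.occupied_of_lt n (by omega))
  descents_of_le n hn := (update_of_ne (by omega) ..).trans (h.descents_of_le n (by omega))
  occupied_zero := (update_of_ne i.succ_ne_zero.symm S d.occupied).trans h.occupied_zero
  occupied_last := update_self ..
  isStep n hn := by
    simp only [PathFamily.extend, update_of_ne (show n ≠ i + 1 by omega)]
    rcases eq_or_ne n i with rfl | hne
    · simpa only [update_self, h.occupied_last] using hE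
    · simpa only [update_of_ne hne, update_of_ne (show n + 1 ≠ i + 1 by omega)]
        using h.isStep n (by omega)

open scoped Classical in
/-- The path families of `IsPathFamily` as a finite set. -/
def pathFamilies (b : ℕ) (K : Finset ℕ) : ℕ → Finset ℤ → Finset PathFamily
  | 0, S =>
      if S = Ico (0 : ℤ) (2 * b) then {⟨update (fun _ => ∅) 0 S, fun _ => ∅⟩} else ∅
  | i + 1, S =>
      if dent b K (i + 1) ⊆ S then
        (({E ∈ (S \ dent b K (i + 1)).powerset |
            Disjoint ((S \ dent b K (i + 1)) \ E) (E.image (· + 1))}).sigma fun E =>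
          pathFamilies b K i (((S \ dent b K (i + 1)) \ E) ∪ E.image (· + 1))).image (extend i S)
      else ∅

open scoped Classical in
theorem mem_pathFamilies {d : PathFamily} : d ∈ pathFamilies b K i S ↔ IsPathFamily b K i S d := by
  induction i generalizing S d with
  | zero =>
    rw [pathFamilies]
    constructor
    · intro hd
      split_ifs at hd with hS
      · obtain rfl := mem_singleton.mp hd
        exact ⟨fun n hn => by simp [hn.ne'], fun _ _ => rfl, by simp [hS], by simp,
          fun n hn => absurd hn n.not_lt_zero⟩
      · exact absurd hd (notMem_empty d)
    · intro h
      rw [if_pos (h.occupied_last.symm.trans h.occupied_zero), mem_singleton]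
      ext n : 2
      · rcases eq_or_ne n 0 with rfl | hn
        · simpa using h.occupied_last
        · simpa [hn] using h.occupied_of_lt n (Nat.pos_of_ne_zero hn)
      · exact h.descents_of_le n n.zero_le
  | succ i ih =>
    rw [pathFamilies]
    constructor
    · intro hd
      split_ifs at hd with hS
      · obtain ⟨⟨E, d⟩, hx, rfl⟩ := mem_image.mp hd
        simp only [mem_sigma, mem_filter, mem_powerset, ih] at hx
        exact hx.2.extend ⟨hS, hx.1.1, hx.1.2, rfl⟩
      · exact absurd hd (notMem_empty d)
    · intro h
      obtain ⟨hD, hE, hdisj, hX⟩ := h.isStep i i.lt_succ_self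
      rw [h.occupied_last] at hD hE hdisj hX
      rw [if_pos hD]
      refine mem_image.mpr ⟨truncate i d, ?_, h.extend_truncate⟩
      simp only [mem_sigma, mem_filter, mem_powerset, ih]
      exact ⟨⟨hE, hdisj⟩, hX ▸ h.truncate⟩

open scoped Classical in
theorem card_pathFamilies : #(pathFamilies b K i S) = pathCount b K i S := by
  induction i generalizing S with
  | zero => rw [pathFamilies, pathCount]; split_ifs <;> simp_all
  | succ i ih =>
    rw [pathFamilies, pathCount, insertCount, apply_ite card, card_empty]
    congr 1
    rw [card_image_of_injOn, card_sigma, sum_filter, stepCount]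
    · simp only [ih]
    · refine Set.LeftInvOn.injOn (f₁' := truncate i) fun x hx => ?_
      exact (mem_pathFamilies.mp (mem_sigma.mp hx).2).truncate_extend

end Count

/-- The unit lattice triangles in the coordinates `u = 2 x / √3`, `v = y - x / √3`, `w = u + v`, in
which the lattice lines are the lines where `u`, `v` or `w` is an integer: `right i j` is the
right-pointing triangle `i ≤ u`, `j ≤ v`, `w ≤ i + j + 1`, and `left i j` is the left-pointing one
`u ≤ i + 1`, `v ≤ j + 1`, `i + j + 1 ≤ w`. -/
inductive Cell
  | right (i j : ℤ)
  | left (i j : ℤ)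

/-- The lozenges: `uv i j` is `i ≤ u ≤ i + 1`, `j ≤ v ≤ j + 1`, and `uw i j`, `vw i j` are likewise
bounded by the lattice lines of the families that name them. -/
inductive Lozenge
  | uv (i j : ℤ)
  | uw (i j : ℤ)
  | vw (i j : ℤ)

namespace Cell

/-- The rotation by `180°` about the centre of the hexagon with sides `2a, 2a, 2b`. -/
def rot (a b : ℕ) : Cell → Cell
  | right i j => left (4 * a - 1 - i) (2 * b - 2 * a - 1 - j)
  | left i j => right (4 * a - 1 - i) (2 * b - 2 * a - 1 - j)

@[simp]
theorem rot_rot (a b : ℕ) (c : Cell) : (c.rot a b).rot a b = c := by cases c <;> simp [rot]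

end Cell

namespace Lozenge

open Cell

/-- The two triangles that make up a lozenge. -/
def cells : Lozenge → Set Cell
  | uv i j => {right i j, left i j}
  | uw i j => {right i (j + 1), left i j}
  | vw i j => {right i j, left (i - 1) j}

theorem right_mem_cells {i j : ℤ} {x : Lozenge} :
    right i j ∈ x.cells ↔ x = uv i j ∨ x = uw i (j - 1) ∨ x = vw i j := by
  rcases x with ⟨m, n⟩ | ⟨m, n⟩ | ⟨m, n⟩ <;> simp [cells] <;> lia

theorem left_mem_cells {i j : ℤ} {x : Lozenge} :
    left i j ∈ x.cells ↔ x = uv i j ∨ x = uw i j ∨ x = vw (i + 1) j := by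
  rcases x with ⟨m, n⟩ | ⟨m, n⟩ | ⟨m, n⟩ <;> simp [cells] <;> lia

/-- The rotation by `180°` about the centre of the hexagon with sides `2a, 2a, 2b`. -/
def rot (a b : ℕ) : Lozenge → Lozenge
  | uv i j => uv (4 * a - 1 - i) (2 * b - 2 * a - 1 - j)
  | uw i j => uw (4 * a - 1 - i) (2 * b - 2 * a - 2 - j)
  | vw i j => vw (4 * a - i) (2 * b - 2 * a - 1 - j)

@[simp]
theorem rot_rot (a b : ℕ) (x : Lozenge) : (x.rot a b).rot a b = x := by cases x <;> simp [rot]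

theorem rot_mem_cells_rot {a b : ℕ} {c : Cell} {x : Lozenge} :
    c.rot a b ∈ (x.rot a b).cells ↔ c ∈ x.cells := by
  rcases c with ⟨i, j⟩ | ⟨i, j⟩ <;> rcases x with ⟨m, n⟩ | ⟨m, n⟩ | ⟨m, n⟩ <;>
    simp [Cell.rot, rot, cells] <;> lia

end Lozenge

open Cell Lozenge

section Tiling

variable {P : Cell → Prop} {τ : Set Lozenge} {a b : ℕ}

/-- The cell `c` is covered by the lozenges of `τ` exactly once if it lies in the region `P`, and
not at all otherwise. -/
def IsTiledAt (P : Cell → Prop) (τ : Set Lozenge) (c : Cell) : Prop :=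
  (P c ↔ ∃ x ∈ τ, c ∈ x.cells) ∧ {x ∈ τ | c ∈ x.cells}.Subsingleton

/-- `p` iff at least one of `q`, `r`, `s` holds, and no two of the latter hold. -/
def IsExclusiveOr (p q r s : Prop) : Prop :=
  (p ↔ q ∨ r ∨ s) ∧ ¬(q ∧ r) ∧ ¬(q ∧ s) ∧ ¬(r ∧ s)

theorem isTiledAt_iff_of_mem_cells_iff {c : Cell} {x y z : Lozenge}
    (h : ∀ t : Lozenge, c ∈ t.cells ↔ t = x ∨ t = y ∨ t = z) (hxy : x ≠ y) (hxz : x ≠ z)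
    (hyz : y ≠ z) : IsTiledAt P τ c ↔ IsExclusiveOr (P c) (x ∈ τ) (y ∈ τ) (z ∈ τ) := by
  simp only [IsTiledAt, IsExclusiveOr, h]
  refine and_congr (by grind) ⟨fun hs => ⟨fun ⟨hx, hy⟩ => hxy (hs ⟨hx, by simp⟩ ⟨hy, by simp⟩),
    fun ⟨hx, hz⟩ => hxz (hs ⟨hx, by simp⟩ ⟨hz, by simp⟩),
    fun ⟨hy, hz⟩ => hyz (hs ⟨hy, by simp⟩ ⟨hz, by simp⟩)⟩, ?_⟩
  rintro ⟨_, _, _⟩ t ⟨ht, rfl | rfl | rfl⟩ t' ⟨ht', rfl | rfl | rfl⟩ <;> tauto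

theorem isTiledAt_right {i j : ℤ} : IsTiledAt P τ (right i j) ↔
    IsExclusiveOr (P (right i j)) (uv i j ∈ τ) (uw i (j - 1) ∈ τ) (vw i j ∈ τ) :=
  isTiledAt_iff_of_mem_cells_iff (fun _ => right_mem_cells) nofun nofun nofun

theorem isTiledAt_left {i j : ℤ} : IsTiledAt P τ (left i j) ↔
    IsExclusiveOr (P (left i j)) (uv i j ∈ τ) (uw i j ∈ τ) (vw (i + 1) j ∈ τ) :=
  isTiledAt_iff_of_mem_cells_iff (fun _ => left_mem_cells) nofun nofun nofun

theorem IsTiledAt.of_mem {c : Cell} {x : Lozenge} (h : IsTiledAt P τ c) (hx : x ∈ τ)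
    (hc : c ∈ x.cells) : P c :=
  h.1.mpr ⟨x, hx, hc⟩

/-- `τ` contains with a lozenge also the rotated one. -/
def IsRotInvariant (a b : ℕ) (τ : Set Lozenge) : Prop := ∀ x ∈ τ, x.rot a b ∈ τ

theorem IsRotInvariant.rot_mem_iff (h : IsRotInvariant a b τ) {x : Lozenge} :
    x.rot a b ∈ τ ↔ x ∈ τ :=
  ⟨fun hx => rot_rot a b x ▸ h _ hx, h x⟩

theorem IsTiledAt.of_rot (hτ : IsRotInvariant a b τ) (hP : ∀ c : Cell, P (c.rot a b) ↔ P c)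
    {c : Cell} (h : IsTiledAt P τ (c.rot a b)) : IsTiledAt P τ c := by
  refine ⟨(hP c).symm.trans (h.1.trans ⟨?_, ?_⟩), fun x hx y hy => ?_⟩
  · rintro ⟨x, hx, hc⟩
    exact ⟨x.rot a b, hτ x hx, by rwa [← rot_mem_cells_rot (a := a) (b := b), Lozenge.rot_rot]⟩
  · rintro ⟨x, hx, hc⟩
    exact ⟨x.rot a b, hτ x hx, rot_mem_cells_rot.mpr hc⟩
  · have hxy := h.2 ⟨hτ x hx.1, rot_mem_cells_rot.mpr hx.2⟩
      ⟨hτ y hy.1, rot_mem_cells_rot.mpr hy.2⟩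
    rw [← Lozenge.rot_rot a b x, hxy, Lozenge.rot_rot]

end Tiling

section Region

variable {a b : ℕ} {K : Finset ℕ}

/-- The triangles in the hexagon with sides `2a, 2a, 2b, 2a, 2a, 2b`. -/
def IsHexagonCell (a b : ℕ) : Cell → Prop
  | right i j => 0 ≤ i ∧ i ≤ 4 * a - 1 ∧ -2 * a ≤ j ∧ j ≤ 2 * b - 1 ∧ 0 ≤ i + j ∧
      i + j ≤ 2 * a + 2 * b - 1
  | left i j => 0 ≤ i ∧ i ≤ 4 * a - 1 ∧ -2 * a ≤ j ∧ j ≤ 2 * b - 1 ∧ -1 ≤ i + j ∧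
      i + j ≤ 2 * a + 2 * b - 2

/-- The triangles in the left-pointing hole at distance `2 k` from the left side. -/
def IsHoleCell (b k : ℕ) : Cell → Prop
  | right i j => i ≤ 2 * k - 1 ∧ j ≤ b - k ∧ b + k - 1 ≤ i + j
  | left i j => i ≤ 2 * k - 1 ∧ j ≤ b - k ∧ b + k - 2 ≤ i + j

/-- The triangles in the hexagon with all holes removed; the right-pointing holes are the rotated
left-pointing ones. -/
def IsRegionCell (a b : ℕ) (K : Finset ℕ) (c : Cell) : Prop :=
  IsHexagonCell a b c ∧ ∀ k ∈ K, ¬IsHoleCell b k c ∧ ¬IsHoleCell b k (c.rot a b)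

theorem isRegionCell_rot {c : Cell} : IsRegionCell a b K (c.rot a b) ↔ IsRegionCell a b K c := by
  refine and_congr ?_ (forall₂_congr fun k _ => by rw [Cell.rot_rot, and_comm])
  cases c <;> simp only [IsHexagonCell, Cell.rot] <;> omega

theorem isRegionCell_right (hK : ∀ k ∈ K, k < a) (ha : 0 < a) {n : ℕ} (hn : n ≤ 2 * a) {j : ℤ} :
    IsRegionCell a b K (right n j) ↔
      (-(n : ℤ) ≤ j ∧ j < 2 * b) ∧ ∀ k ∈ K, ¬(n + 1 = 2 * k ∧ j = b - k) := by
  refine ⟨fun ⟨hhex, hhole⟩ => ⟨?_, fun k hk => ?_⟩, fun ⟨_, hhole⟩ => ⟨?_, fun k hk => ?_⟩⟩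
  · simp only [IsHexagonCell] at hhex; omega
  · have := (hhole k hk).1; simp only [IsHoleCell] at this; omega
  · simp only [IsHexagonCell]; omega
  · have := hhole k hk
    have := hK k hk
    simp only [IsHoleCell, Cell.rot]
    omega

theorem mem_dent {n : ℕ} {j : ℤ} :
    j ∈ dent b K n ↔ ∃ k ∈ K, n = 2 * k ∧ (j = b - k - 1 ∨ j = b - k) := by
  rw [dent]
  split_ifs with h
  · simp only [mem_insert, mem_singleton]
    refine ⟨fun hj => ⟨n / 2, h.2, by omega, hj⟩, ?_⟩
    rintro ⟨k, -, rfl, hj⟩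
    omega
  · simp only [notMem_empty, false_iff]
    rintro ⟨k, hk, rfl, -⟩
    exact h ⟨by omega, by rwa [Nat.mul_div_cancel_left k two_pos]⟩

theorem isRegionCell_left (hK : ∀ k ∈ K, k < a) {n : ℕ} (hn : n < 2 * a) {j : ℤ} :
    IsRegionCell a b K (left n j) ↔
      IsRegionCell a b K (right (n + 1) j) ∧ j ∉ dent b K (n + 1) := by
  rw [← Nat.cast_succ, isRegionCell_right hK (by omega) hn, mem_dent]
  refine ⟨fun ⟨hhex, hhole⟩ => ⟨⟨?_, fun k hk => ?_⟩, ?_⟩,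
    fun ⟨⟨_, hhole⟩, hdent⟩ => ⟨?_, fun k hk => ?_⟩⟩
  · simp only [IsHexagonCell] at hhex; omega
  · have := (hhole k hk).1; simp only [IsHoleCell] at this; omega
  · rintro ⟨k, hk, hnk, hjk⟩
    have := (hhole k hk).1; simp only [IsHoleCell] at this; omega
  · simp only [IsHexagonCell]; omega
  · have := hhole k hk
    have := hK k hk
    have : ¬(n + 1 = 2 * k ∧ (j = b - k - 1 ∨ j = b - k)) := fun h => hdent ⟨k, hk, h⟩
    simp only [IsHoleCell, Cell.rot]
    omega

theorem isRegionCell_of_mem_dent (hK : ∀ k ∈ K, k < a) {n : ℕ} {j : ℤ}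
    (hn : n < 2 * a) (hj : j ∈ dent b K (n + 1)) : IsRegionCell a b K (right (n + 1) j) := by
  obtain ⟨k, -, hnk, hjk⟩ := mem_dent.mp hj
  rw [← Nat.cast_succ, isRegionCell_right hK (by omega) hn]
  exact ⟨by omega, fun k' _ => by omega⟩

end Region

variable {a b : ℕ} {K : Finset ℕ}

section OfTiling

open scoped Classical in
/-- The path family read off the left half of a tiling: between times `n` and `n + 1` the paths
cross the lozenges `uv n j` and `uw n j`. -/
def pathsOfTiling (a b : ℕ) (K : Finset ℕ) (τ : Set Lozenge) : PathFamily where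
  occupied n := if n ≤ 2 * a then
    {j ∈ Ico (-2 * a : ℤ) (2 * b) | IsRegionCell a b K (right n j) ∧ vw n j ∉ τ} else ∅
  descents n := if n < 2 * a then {j ∈ Ico (-2 * a : ℤ) (2 * b) | uw n j ∈ τ} else ∅

variable {τ : Set Lozenge} {n : ℕ} {j : ℤ}

theorem mem_occupied_pathsOfTiling (hn : n ≤ 2 * a) :
    j ∈ (pathsOfTiling a b K τ).occupied n ↔
      IsRegionCell a b K (right n j) ∧ vw n j ∉ τ := by
  simp only [pathsOfTiling, if_pos hn, mem_filter, and_iff_right_iff_imp, mem_Ico]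
  rintro ⟨⟨h, -⟩, -⟩
  simp only [IsHexagonCell] at h
  omega

theorem mem_descents_pathsOfTiling (hτ : ∀ c, IsTiledAt (IsRegionCell a b K) τ c)
    (hn : n < 2 * a) : j ∈ (pathsOfTiling a b K τ).descents n ↔ uw n j ∈ τ := by
  simp only [pathsOfTiling, if_pos hn, mem_filter, and_iff_right_iff_imp, mem_Ico]
  intro h
  have := ((hτ _).of_mem h (left_mem_cells.mpr (.inr (.inl rfl)))).1
  simp only [IsHexagonCell] at this
  omega

theorem isStep_pathsOfTiling (hK : ∀ k ∈ K, k < a)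
    (hτ : ∀ c, IsTiledAt (IsRegionCell a b K) τ c) (hn : n < 2 * a) :
    IsStep (dent b K (n + 1)) ((pathsOfTiling a b K τ).occupied n)
      ((pathsOfTiling a b K τ).occupied (n + 1)) ((pathsOfTiling a b K τ).descents n) := by
  refine isStep_iff.mpr fun j => ?_
  have hright := isTiledAt_right.mp (hτ (right n j))
  have hleft := isTiledAt_left.mp (hτ (left n j))
  have hdent := isRegionCell_of_mem_dent (b := b) (j := j) hK hn
  rw [isRegionCell_left hK hn] at hleft
  rw [mem_occupied_pathsOfTiling hn.le, mem_occupied_pathsOfTiling hn,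
    mem_descents_pathsOfTiling hτ hn, mem_descents_pathsOfTiling hτ hn, Nat.cast_succ]
  grind [IsExclusiveOr]

theorem vw_zero_notMem (hτ : ∀ c, IsTiledAt (IsRegionCell a b K) τ c) (j : ℤ) : vw 0 j ∉ τ := by
  intro h
  have := ((hτ (left (-1) j)).of_mem h (left_mem_cells.mpr (.inr (.inr rfl)))).1
  simp [IsHexagonCell] at this

theorem isPathFamily_pathsOfTiling (ha : 0 < a) (hK : ∀ k ∈ K, k < a)
    (hτ : ∀ c, IsTiledAt (IsRegionCell a b K) τ c) :
    IsPathFamily b K (2 * a) ((pathsOfTiling a b K τ).occupied (2 * a))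
      (pathsOfTiling a b K τ) where
  occupied_of_lt _ hn := if_neg hn.not_ge
  descents_of_le _ hn := if_neg hn.not_gt
  occupied_zero := by
    ext j
    rw [mem_occupied_pathsOfTiling (Nat.zero_le _), isRegionCell_right hK ha (Nat.zero_le _),
      mem_Ico]
    have := vw_zero_notMem hτ j
    simp only [Nat.cast_zero, neg_zero, this, not_false_eq_true, and_true, and_iff_left_iff_imp]
    exact fun _ k _ => by omega
  occupied_last := rfl
  isStep _ hn := isStep_pathsOfTiling hK hτ hn

theorem isRegionCell_middle (ha : 0 < a) (hK : ∀ k ∈ K, k < a) :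
    IsRegionCell a b K (right (2 * a : ℕ) j) ↔ -2 * (a : ℤ) ≤ j ∧ j < 2 * b := by
  rw [isRegionCell_right hK ha le_rfl]
  refine ⟨fun h => by omega, fun _ => ⟨by omega, fun k _ => by omega⟩⟩

theorem occupied_pathsOfTiling_mem_symmetricSets (ha : 0 < a) (hK : ∀ k ∈ K, k < a)
    (hτ : IsRotInvariant a b τ) :
    (pathsOfTiling a b K τ).occupied (2 * a) ∈ symmetricSets ((b : ℤ) - a) (a + b) := by
  simp only [symmetricSets, mem_filter, mem_powerset, subset_iff, mem_Ico,
    mem_occupied_pathsOfTiling le_rfl, isRegionCell_middle ha hK]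
  refine ⟨fun j hj => by lia, fun j hj => ⟨by lia, fun hvw => hj.2 ?_⟩⟩
  rw [← hτ.rot_mem_iff]
  convert hvw using 1
  simp only [Lozenge.rot, vw.injEq]
  lia

end OfTiling

section OfPaths

/-- The lozenges of the left half of the hexagon that are determined by a path family. -/
def IsLeftLozenge (a b : ℕ) (K : Finset ℕ) (d : PathFamily) : Lozenge → Prop
  | uv i j => ∃ n < 2 * a, i = n ∧ j ∈ (d.occupied (n + 1) \ dent b K (n + 1)) \ d.descents n
  | uw i j => ∃ n < 2 * a, i = n ∧ j ∈ d.descents n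
  | vw i j => ∃ n ≤ 2 * a, i = n ∧ IsRegionCell a b K (right n j) ∧ j ∉ d.occupied n

/-- The rotationally invariant tiling determined by a path family. -/
def tilingOfPaths (a b : ℕ) (K : Finset ℕ) (d : PathFamily) : Set Lozenge :=
  {x | IsLeftLozenge a b K d x ∨ IsLeftLozenge a b K d (x.rot a b)}

theorem isRotInvariant_tilingOfPaths (d : PathFamily) :
    IsRotInvariant a b (tilingOfPaths a b K d) := by
  rintro x (hx | hx)
  · exact .inr (by rwa [Lozenge.rot_rot])
  · exact .inl hx

variable {S : Finset ℤ} {d : PathFamily} {n : ℕ} {j : ℤ}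

theorem uv_mem_tilingOfPaths (hn : n < 2 * a) :
    uv n j ∈ tilingOfPaths a b K d ↔ (j ∈ d.occupied (n + 1) ∧ j ∉ dent b K (n + 1)) ∧
      j ∉ d.descents n := by
  rw [← mem_sdiff, ← mem_sdiff]
  refine ⟨?_, fun h => .inl ⟨n, hn, rfl, h⟩⟩
  rintro (⟨m, hm, hnm, h⟩ | ⟨m, hm, hnm, -⟩)
  · obtain rfl : n = m := by omega
    exact h
  · omega

theorem uw_mem_tilingOfPaths (hn : n < 2 * a) :
    uw n j ∈ tilingOfPaths a b K d ↔ j ∈ d.descents n := by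
  refine ⟨?_, fun h => .inl ⟨n, hn, rfl, h⟩⟩
  rintro (⟨m, hm, hnm, h⟩ | ⟨m, hm, hnm, -⟩)
  · obtain rfl : n = m := by omega
    exact h
  · omega

theorem vw_mem_tilingOfPaths (ha : 0 < a) (hK : ∀ k ∈ K, k < a)
    (hd : IsPathFamily b K (2 * a) S d) (hS : S ∈ symmetricSets ((b : ℤ) - a) (a + b))
    (hn : n ≤ 2 * a) :
    vw n j ∈ tilingOfPaths a b K d ↔ IsRegionCell a b K (right n j) ∧ j ∉ d.occupied n := by
  refine ⟨?_, fun h => .inl ⟨n, hn, rfl, h⟩⟩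
  rintro (⟨m, hm, hnm, h⟩ | ⟨m, hm, hnm, h⟩)
  · obtain rfl : n = m := by omega
    exact h
  · obtain rfl : m = 2 * a := by omega
    obtain rfl : n = 2 * a := by omega
    rw [isRegionCell_middle ha hK, hd.occupied_last] at h ⊢
    refine ⟨by omega, fun hj => h.2 ?_⟩
    convert (mem_filter.mp hS).2 j hj using 1
    lia

theorem IsPathFamily.bounds (hd : IsPathFamily b K (2 * a) S d) (hn : n ≤ 2 * a)
    (hj : j ∈ d.occupied n) : -(n : ℤ) ≤ j ∧ j < 2 * b := by
  induction n generalizing j with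
  | zero =>
    rw [hd.occupied_zero, mem_Ico] at hj
    simpa using hj
  | succ n ih =>
    have hX {y : ℤ} := (isStep_iff.mp (hd.isStep n hn) y).2.2.2
    by_cases hdent : j ∈ dent b K (n + 1)
    · obtain ⟨k, -, hk⟩ := mem_dent.mp hdent
      omega
    by_cases hF : j ∈ d.descents n
    · have := ih (by omega) (hX (y := j + 1).mpr (.inr (by simpa using hF)))
      omega
    · have := ih (by omega) (hX.mpr (.inl ⟨hj, hdent, hF⟩))
      omega

theorem IsPathFamily.isRegionCell (ha : 0 < a) (hK : ∀ k ∈ K, k < a)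
    (hd : IsPathFamily b K (2 * a) S d) (hn : n ≤ 2 * a) (hj : j ∈ d.occupied n) :
    IsRegionCell a b K (right n j) := by
  refine (isRegionCell_right hK ha hn).mpr ⟨hd.bounds hn hj, ?_⟩
  rintro k hk ⟨hnk, rfl⟩
  have := hK k hk
  have hstep := isStep_iff.mp (hd.isStep n (by omega))
  rcases (hstep _).2.2.2.mp hj with h | h
  · exact h.2.1 (mem_dent.mpr ⟨k, hk, hnk, .inr rfl⟩)
  · exact ((hstep _).2.1 h).2 (mem_dent.mpr ⟨k, hk, hnk, .inl rfl⟩)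

theorem isTiledAt_tilingOfPaths_right (ha : 0 < a) (hK : ∀ k ∈ K, k < a)
    (hd : IsPathFamily b K (2 * a) S d) (hS : S ∈ symmetricSets ((b : ℤ) - a) (a + b))
    (hn : n < 2 * a) : IsTiledAt (IsRegionCell a b K) (tilingOfPaths a b K d) (right n j) := by
  rw [isTiledAt_right, uv_mem_tilingOfPaths hn, uw_mem_tilingOfPaths hn,
    vw_mem_tilingOfPaths ha hK hd hS hn.le]
  have hstep := isStep_iff.mp (hd.isStep n hn) j
  have hregion : j ∈ d.occupied n → _ := hd.isRegionCell ha hK hn.le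
  grind [IsExclusiveOr]

theorem isTiledAt_tilingOfPaths_left (ha : 0 < a) (hK : ∀ k ∈ K, k < a)
    (hd : IsPathFamily b K (2 * a) S d) (hS : S ∈ symmetricSets ((b : ℤ) - a) (a + b))
    (hn : n < 2 * a) : IsTiledAt (IsRegionCell a b K) (tilingOfPaths a b K d) (left n j) := by
  have hvw := vw_mem_tilingOfPaths (j := j) ha hK hd hS hn
  have hregion : j ∈ d.occupied (n + 1) → _ := hd.isRegionCell ha hK hn
  have hstep := isStep_iff.mp (hd.isStep n hn) j
  rw [Nat.cast_succ] at hvw hregion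
  rw [isTiledAt_left, uv_mem_tilingOfPaths hn, uw_mem_tilingOfPaths hn, hvw,
    isRegionCell_left hK hn]
  grind [IsExclusiveOr]

theorem notMem_tilingOfPaths_of_neg {i : ℤ} (hi : i < 0) :
    uv i j ∉ tilingOfPaths a b K d ∧ uw i j ∉ tilingOfPaths a b K d ∧
      vw i j ∉ tilingOfPaths a b K d := by
  refine ⟨?_, ?_, ?_⟩ <;> rintro (⟨_, _, hnm, -⟩ | ⟨_, _, hnm, -⟩) <;> omega

theorem vw_zero_notMem_tilingOfPaths (ha : 0 < a) (hK : ∀ k ∈ K, k < a)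
    (hd : IsPathFamily b K (2 * a) S d) (hS : S ∈ symmetricSets ((b : ℤ) - a) (a + b)) :
    vw 0 j ∉ tilingOfPaths a b K d := by
  rw [← Nat.cast_zero, vw_mem_tilingOfPaths ha hK hd hS (Nat.zero_le _), hd.occupied_zero,
    isRegionCell_right hK ha (Nat.zero_le _), mem_Ico]
  simp only [Nat.cast_zero, neg_zero]
  tauto

theorem isTiledAt_tilingOfPaths_of_neg (ha : 0 < a) (hK : ∀ k ∈ K, k < a)
    (hd : IsPathFamily b K (2 * a) S d) (hS : S ∈ symmetricSets ((b : ℤ) - a) (a + b))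
    {i : ℤ} (hi : i < 0) :
    IsTiledAt (IsRegionCell a b K) (tilingOfPaths a b K d) (right i j) ∧
      IsTiledAt (IsRegionCell a b K) (tilingOfPaths a b K d) (left i j) := by
  have hvw : vw (i + 1) j ∉ tilingOfPaths a b K d := by
    rcases eq_or_ne (i + 1) 0 with h | h
    · exact h ▸ vw_zero_notMem_tilingOfPaths ha hK hd hS
    · exact (notMem_tilingOfPaths_of_neg (by omega)).2.2
  have hright : ¬IsRegionCell a b K (right i j) := fun h => hi.not_ge h.1.1
  have hleft : ¬IsRegionCell a b K (left i j) := fun h => hi.not_ge h.1.1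
  simp only [isTiledAt_right, isTiledAt_left, IsExclusiveOr, hvw, hright, hleft,
    notMem_tilingOfPaths_of_neg (b := b) hi, or_self, and_self, not_false_eq_true]

theorem isTiledAt_tilingOfPaths (ha : 0 < a) (hK : ∀ k ∈ K, k < a)
    (hd : IsPathFamily b K (2 * a) S d) (hS : S ∈ symmetricSets ((b : ℤ) - a) (a + b)) (c : Cell) :
    IsTiledAt (IsRegionCell a b K) (tilingOfPaths a b K d) c := by
  have leftHalf (i j : ℤ) (hi : i < 2 * a) :
      IsTiledAt (IsRegionCell a b K) (tilingOfPaths a b K d) (right i j) ∧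
        IsTiledAt (IsRegionCell a b K) (tilingOfPaths a b K d) (left i j) := by
    rcases lt_or_ge i 0 with hneg | hnonneg
    · exact isTiledAt_tilingOfPaths_of_neg ha hK hd hS hneg
    · lift i to ℕ using hnonneg
      exact ⟨isTiledAt_tilingOfPaths_right ha hK hd hS (by omega),
        isTiledAt_tilingOfPaths_left ha hK hd hS (by omega)⟩
  have rotate {c : Cell} :
      IsTiledAt (IsRegionCell a b K) (tilingOfPaths a b K d) (c.rot a b) →
        IsTiledAt (IsRegionCell a b K) (tilingOfPaths a b K d) c :=
    IsTiledAt.of_rot (isRotInvariant_tilingOfPaths d) fun _ => isRegionCell_rot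
  rcases c with ⟨i, j⟩ | ⟨i, j⟩ <;> rcases lt_or_ge i (2 * a) with hi | hi
  · exact (leftHalf i j hi).1
  · exact rotate (leftHalf _ _ (by omega)).2
  · exact (leftHalf i j hi).2
  · exact rotate (leftHalf _ _ (by omega)).1

theorem pathsOfTiling_tilingOfPaths (ha : 0 < a) (hK : ∀ k ∈ K, k < a)
    (hd : IsPathFamily b K (2 * a) S d) (hS : S ∈ symmetricSets ((b : ℤ) - a) (a + b)) :
    pathsOfTiling a b K (tilingOfPaths a b K d) = d := by
  ext n j : 3
  · rcases le_or_gt n (2 * a) with hn | hn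
    · rw [mem_occupied_pathsOfTiling hn, vw_mem_tilingOfPaths ha hK hd hS hn]
      have : j ∈ d.occupied n → _ := hd.isRegionCell ha hK hn
      tauto
    · simp only [pathsOfTiling, if_neg hn.not_ge, hd.occupied_of_lt n hn]
  · rcases lt_or_ge n (2 * a) with hn | hn
    · rw [mem_descents_pathsOfTiling (isTiledAt_tilingOfPaths ha hK hd hS) hn,
        uw_mem_tilingOfPaths hn]
    · simp only [pathsOfTiling, if_neg hn.not_gt, hd.descents_of_le n hn]

end OfPaths

section Bijection

variable {τ : Set Lozenge}

theorem mem_of_isLeftLozenge_pathsOfTiling (hK : ∀ k ∈ K, k < a)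
    (hτ : ∀ c, IsTiledAt (IsRegionCell a b K) τ c) {x : Lozenge}
    (hx : IsLeftLozenge a b K (pathsOfTiling a b K τ) x) : x ∈ τ := by
  rcases x with ⟨_, j⟩ | ⟨_, j⟩ | ⟨_, j⟩ <;> obtain ⟨n, hn, rfl, hj⟩ := hx
  · rw [mem_sdiff, mem_sdiff, mem_occupied_pathsOfTiling hn, mem_descents_pathsOfTiling hτ hn,
      Nat.cast_succ] at hj
    have := isTiledAt_left.mp (hτ (left n j))
    rw [isRegionCell_left hK hn] at this
    unfold IsExclusiveOr at this
    tauto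
  · exact (mem_descents_pathsOfTiling hτ hn).mp hj
  · rw [mem_occupied_pathsOfTiling hn] at hj
    tauto

/-- The lozenge lies in the left half of the hexagon. -/
def IsInLeftHalf (a : ℕ) : Lozenge → Prop
  | uv i _ => i < 2 * a
  | uw i _ => i < 2 * a
  | vw i _ => i ≤ 2 * a

theorem isInLeftHalf_or_rot (x : Lozenge) : IsInLeftHalf a x ∨ IsInLeftHalf a (x.rot a b) := by
  cases x <;> simp only [IsInLeftHalf, Lozenge.rot] <;> omega

theorem isLeftLozenge_pathsOfTiling (hK : ∀ k ∈ K, k < a)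
    (hτ : ∀ c, IsTiledAt (IsRegionCell a b K) τ c) {x : Lozenge} (hx : x ∈ τ)
    (hleft : IsInLeftHalf a x) : IsLeftLozenge a b K (pathsOfTiling a b K τ) x := by
  have hregion {c : Cell} (hc : c ∈ x.cells) : IsRegionCell a b K c := (hτ c).of_mem hx hc
  rcases x with ⟨i, j⟩ | ⟨i, j⟩ | ⟨i, j⟩ <;> simp only [IsInLeftHalf] at hleft
  · have hcell := hregion (left_mem_cells.mpr (.inl rfl))
    lift i to ℕ using hcell.1.1
    have hn : i < 2 * a := by omega
    refine ⟨i, hn, rfl, ?_⟩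
    have htiled := isTiledAt_left.mp (hτ (left i j))
    rw [isRegionCell_left hK hn] at hcell
    rw [mem_sdiff, mem_sdiff, mem_occupied_pathsOfTiling hn, mem_descents_pathsOfTiling hτ hn,
      Nat.cast_succ]
    exact ⟨⟨⟨hcell.1, fun h => htiled.2.2.1 ⟨hx, h⟩⟩, hcell.2⟩, fun h => htiled.2.1 ⟨hx, h⟩⟩
  · have hcell := hregion (left_mem_cells.mpr (.inr (.inl rfl)))
    lift i to ℕ using hcell.1.1
    exact ⟨i, by omega, rfl, (mem_descents_pathsOfTiling hτ (by omega)).mpr hx⟩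
  · have hcell := hregion (right_mem_cells.mpr (.inr (.inr rfl)))
    lift i to ℕ using hcell.1.1
    have hn : i ≤ 2 * a := by omega
    exact ⟨i, hn, rfl, hcell, fun h => ((mem_occupied_pathsOfTiling hn).mp h).2 hx⟩

theorem tilingOfPaths_pathsOfTiling (hK : ∀ k ∈ K, k < a)
    (hτ : ∀ c, IsTiledAt (IsRegionCell a b K) τ c) (hrot : IsRotInvariant a b τ) :
    tilingOfPaths a b K (pathsOfTiling a b K τ) = τ := by
  ext x
  constructor
  · rintro (hx | hx)
    · exact mem_of_isLeftLozenge_pathsOfTiling hK hτ hx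
    · exact hrot.rot_mem_iff.mp (mem_of_isLeftLozenge_pathsOfTiling hK hτ hx)
  · exact fun hx => (isInLeftHalf_or_rot x).imp (isLeftLozenge_pathsOfTiling hK hτ hx)
      (isLeftLozenge_pathsOfTiling hK hτ (hrot x hx))

/-- Rotationally invariant tilings correspond to path families in the left half of the hexagon that
end in a set symmetric about the centre. -/
def tilingEquivPathFamily (ha : 0 < a) (hK : ∀ k ∈ K, k < a) :
    {τ : Set Lozenge // (∀ c, IsTiledAt (IsRegionCell a b K) τ c) ∧ IsRotInvariant a b τ} ≃
      (symmetricSets ((b : ℤ) - a) (a + b)).sigma (pathFamilies b K (2 * a)) where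
  toFun τ := ⟨⟨_, pathsOfTiling a b K τ⟩, mem_sigma.mpr
    ⟨occupied_pathsOfTiling_mem_symmetricSets ha hK τ.2.2,
      mem_pathFamilies.mpr (isPathFamily_pathsOfTiling ha hK τ.2.1)⟩⟩
  invFun x := ⟨tilingOfPaths a b K x.1.2,
    isTiledAt_tilingOfPaths ha hK (mem_pathFamilies.mp (mem_sigma.mp x.2).2) (mem_sigma.mp x.2).1,
    isRotInvariant_tilingOfPaths _⟩
  left_inv τ := Subtype.ext (tilingOfPaths_pathsOfTiling hK τ.2.1 τ.2.2)
  right_inv := by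
    rintro ⟨⟨S, d⟩, hx⟩
    obtain ⟨hS, hd⟩ := mem_sigma.mp hx
    rw [mem_pathFamilies] at hd
    have hpaths : pathsOfTiling a b K (tilingOfPaths a b K d) = d :=
      pathsOfTiling_tilingOfPaths ha hK hd hS
    have hlast : d.occupied (2 * a) = S := hd.occupied_last
    simp only [hpaths, hlast]

theorem card_rotInvariant_tilings (ha : 0 < a) (hK : ∀ k ∈ K, k < a) :
    Nat.card {τ : Set Lozenge //
        (∀ c, IsTiledAt (IsRegionCell a b K) τ c) ∧ IsRotInvariant a b τ} =
      ∑ S ∈ symmetricSets ((b : ℤ) - a) (a + b), pathCount b K (2 * a) S := by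
  rw [Nat.card_congr (tilingEquivPathFamily ha hK), Nat.card_eq_fintype_card, Fintype.card_coe,
    card_sigma]
  exact sum_congr rfl fun _ _ => card_pathFamilies

end Bijection

end Discrete

section Geometry

open PP Set

section Coordinates

theorem s3_pos : 0 < s3 := Real.sqrt_pos.2 (by norm_num)

/-- The point of the plane with lattice coordinates `u` and `v`. -/
def ofCoords (u v : ℝ) : Pt := (u * (s3 / 2), v + u / 2)

/-- The first lattice coordinate, constant on the vertical lattice lines. -/
def uCoord : Pt →ₗ[ℝ] ℝ := (2 / s3) • LinearMap.fst ℝ ℝ ℝ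

/-- The second lattice coordinate, constant on the rising lattice lines. -/
def vCoord : Pt →ₗ[ℝ] ℝ := LinearMap.snd ℝ ℝ ℝ - (1 / s3) • LinearMap.fst ℝ ℝ ℝ

/-- The sum of the lattice coordinates, constant on the falling lattice lines. -/
def wCoord : Pt →ₗ[ℝ] ℝ := uCoord + vCoord

theorem wCoord_apply (p : Pt) : wCoord p = uCoord p + vCoord p := rfl

@[simp]
theorem uCoord_ofCoords (u v : ℝ) : uCoord (ofCoords u v) = u := by
  have := s3_pos.ne'
  simp only [uCoord, ofCoords, LinearMap.smul_apply, LinearMap.fst_apply, smul_eq_mul]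
  field_simp

@[simp]
theorem vCoord_ofCoords (u v : ℝ) : vCoord (ofCoords u v) = v := by
  have := s3_pos.ne'
  simp only [vCoord, ofCoords, LinearMap.sub_apply, LinearMap.snd_apply, LinearMap.smul_apply,
    LinearMap.fst_apply, smul_eq_mul]
  field_simp
  ring

@[simp]
theorem wCoord_ofCoords (u v : ℝ) : wCoord (ofCoords u v) = u + v := by
  rw [wCoord_apply, uCoord_ofCoords, vCoord_ofCoords]

@[simp]
theorem ofCoords_uCoord_vCoord (p : Pt) : ofCoords (uCoord p) (vCoord p) = p := by
  have := s3_pos.ne'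
  ext
  · simp only [uCoord, ofCoords, LinearMap.smul_apply, LinearMap.fst_apply, smul_eq_mul]
    field_simp
  · simp only [uCoord, vCoord, ofCoords, LinearMap.sub_apply, LinearMap.snd_apply,
      LinearMap.smul_apply, LinearMap.fst_apply, smul_eq_mul]
    field_simp
    ring

theorem ofCoords_add (u v u' v' : ℝ) :
    ofCoords u v + ofCoords u' v' = ofCoords (u + u') (v + v') := by
  ext <;> simp only [ofCoords, Prod.fst_add, Prod.snd_add] <;> ring

theorem ofCoords_sub (u v u' v' : ℝ) :
    ofCoords u v - ofCoords u' v' = ofCoords (u - u') (v - v') := by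
  ext <;> simp only [ofCoords, Prod.fst_sub, Prod.snd_sub] <;> ring

theorem ofCoords_neg (u v : ℝ) : -ofCoords u v = ofCoords (-u) (-v) := by
  ext <;> simp only [ofCoords, Prod.fst_neg, Prod.snd_neg] <;> ring

theorem ofCoords_inj {u v u' v' : ℝ} : ofCoords u v = ofCoords u' v' ↔ u = u' ∧ v = v' := by
  refine ⟨fun h => ?_, by rintro ⟨rfl, rfl⟩; rfl⟩
  simpa using And.intro (congrArg uCoord h) (congrArg vCoord h)

theorem uCoord_surjective : Function.Surjective uCoord := fun x => ⟨ofCoords x 0, by simp⟩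

theorem vCoord_surjective : Function.Surjective vCoord := fun x => ⟨ofCoords 0 x, by simp⟩

theorem wCoord_surjective : Function.Surjective wCoord := fun x => ⟨ofCoords 0 x, by simp⟩

end Coordinates

section Convex

variable {C : Set Pt} (hC : Convex ℝ C) {x y z : ℝ}
include hC

theorem ofCoords_add_mul_mem {u v d e : ℝ} (hx : ofCoords (u + x * d) (v + x * e) ∈ C)
    (hy : ofCoords (u + y * d) (v + y * e) ∈ C) (hz : z ∈ Icc x y) :
    ofCoords (u + z * d) (v + z * e) ∈ C := by
  rw [← segment_eq_Icc (hz.1.trans hz.2)] at hz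
  obtain ⟨s, t, hs, ht, hst, rfl⟩ := hz
  convert hC hx hy hs ht hst using 1
  simp only [ofCoords, Prod.smul_mk, Prod.mk_add_mk, smul_eq_mul, Prod.mk.injEq]
  exact ⟨by linear_combination -(u * (s3 / 2)) * hst, by linear_combination -(v + u / 2) * hst⟩

theorem ofCoords_mem_of_uCoord_eq {u : ℝ} (hx : ofCoords u x ∈ C) (hy : ofCoords u y ∈ C)
    (hz : z ∈ Icc x y) : ofCoords u z ∈ C := by
  simpa using ofCoords_add_mul_mem hC (u := u) (v := 0) (d := 0) (e := 1) (x := x) (y := y)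
    (by simpa using hx) (by simpa using hy) hz

theorem ofCoords_mem_of_vCoord_eq {v : ℝ} (hx : ofCoords x v ∈ C) (hy : ofCoords y v ∈ C)
    (hz : z ∈ Icc x y) : ofCoords z v ∈ C := by
  simpa using ofCoords_add_mul_mem hC (u := 0) (v := v) (d := 1) (e := 0) (x := x) (y := y)
    (by simpa using hx) (by simpa using hy) hz

theorem ofCoords_mem_of_wCoord_eq {w : ℝ} (hx : ofCoords x (w - x) ∈ C)
    (hy : ofCoords y (w - y) ∈ C) (hz : z ∈ Icc x y) : ofCoords z (w - z) ∈ C := by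
  simpa [sub_eq_add_neg] using
    ofCoords_add_mul_mem hC (u := 0) (v := w) (d := 1) (e := -1) (x := x) (y := y)
      (by simpa [sub_eq_add_neg] using hx) (by simpa [sub_eq_add_neg] using hy) hz

end Convex

section Polygon

/-- The polygon cut out by lattice lines of all three families: a hexagon, possibly with some sides
of length `0`. The lozenges, the holes and the big hexagon are all of this form. -/
def polygon (u₀ u₁ v₀ v₁ w₀ w₁ : ℤ) : Set Pt :=
  uCoord ⁻¹' Icc u₀ u₁ ∩ (vCoord ⁻¹' Icc v₀ v₁ ∩ wCoord ⁻¹' Icc w₀ w₁)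

variable {u₀ u₁ v₀ v₁ w₀ w₁ : ℤ} {p : Pt}

theorem mem_polygon : p ∈ polygon u₀ u₁ v₀ v₁ w₀ w₁ ↔
    (u₀ ≤ ⌊uCoord p⌋ ∧ ⌈uCoord p⌉ ≤ u₁) ∧ (v₀ ≤ ⌊vCoord p⌋ ∧ ⌈vCoord p⌉ ≤ v₁) ∧
      w₀ ≤ ⌊wCoord p⌋ ∧ ⌈wCoord p⌉ ≤ w₁ := by
  simp only [polygon, mem_inter_iff, mem_preimage, mem_Icc, Int.le_floor, Int.ceil_le]

theorem convex_polygon : Convex ℝ (polygon u₀ u₁ v₀ v₁ w₀ w₁) :=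
  ((convex_Icc _ _).linear_preimage uCoord).inter
    (((convex_Icc _ _).linear_preimage vCoord).inter ((convex_Icc _ _).linear_preimage wCoord))

theorem interior_preimage_linearMap {f : Pt →ₗ[ℝ] ℝ} (hf : Function.Surjective f) (s : Set ℝ) :
    interior (f ⁻¹' s) = f ⁻¹' interior s :=
  ((f.isOpenMap_of_finiteDimensional hf).preimage_interior_eq_interior_preimage
    f.continuous_of_finiteDimensional s).symm

theorem mem_interior_polygon : p ∈ interior (polygon u₀ u₁ v₀ v₁ w₀ w₁) ↔
    (u₀ < ⌈uCoord p⌉ ∧ ⌊uCoord p⌋ < u₁) ∧ (v₀ < ⌈vCoord p⌉ ∧ ⌊vCoord p⌋ < v₁) ∧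
      w₀ < ⌈wCoord p⌉ ∧ ⌊wCoord p⌋ < w₁ := by
  simp only [polygon, interior_inter, interior_preimage_linearMap uCoord_surjective,
    interior_preimage_linearMap vCoord_surjective, interior_preimage_linearMap wCoord_surjective,
    interior_Icc, mem_inter_iff, mem_preimage, mem_Ioo, Int.lt_ceil, Int.floor_lt]

theorem polygon_subset_of_convex {C : Set Pt} (hC : Convex ℝ C)
    (hvertices : {ofCoords u₀ (w₀ - u₀), ofCoords u₀ v₁, ofCoords (w₁ - v₁) v₁,
      ofCoords u₁ (w₁ - u₁), ofCoords u₁ v₀, ofCoords (w₀ - v₀) v₀} ⊆ C) :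
    polygon u₀ u₁ v₀ v₁ w₀ w₁ ⊆ C := by
  rintro p ⟨⟨hu₀, hu₁⟩, ⟨hv₀, hv₁⟩, hw₀, hw₁⟩
  rw [wCoord_apply] at hw₀ hw₁
  simp only [insert_subset_iff, singleton_subset_iff] at hvertices
  obtain ⟨hu₀w₀, hu₀v₁, hw₁v₁, hw₁u₁, hu₁v₀, hw₀v₀⟩ := hvertices
  obtain ⟨y, hy, hyC⟩ : ∃ y ≤ vCoord p, ofCoords (uCoord p) y ∈ C := by
    rcases le_total (uCoord p) (w₀ - v₀) with h | h
    · exact ⟨w₀ - uCoord p, by linarith, ofCoords_mem_of_wCoord_eq hC hu₀w₀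
        (by rwa [sub_sub_cancel]) ⟨hu₀, h⟩⟩
    · exact ⟨v₀, hv₀, ofCoords_mem_of_vCoord_eq hC hw₀v₀ hu₁v₀ ⟨h, hu₁⟩⟩
  obtain ⟨z, hz, hzC⟩ : ∃ z, vCoord p ≤ z ∧ ofCoords (uCoord p) z ∈ C := by
    rcases le_total (uCoord p) (w₁ - v₁) with h | h
    · exact ⟨v₁, hv₁, ofCoords_mem_of_vCoord_eq hC hu₀v₁ hw₁v₁ ⟨hu₀, h⟩⟩
    · exact ⟨w₁ - uCoord p, by linarith, ofCoords_mem_of_wCoord_eq hC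
        (by rwa [sub_sub_cancel]) hw₁u₁ ⟨h, hu₁⟩⟩
  rw [← ofCoords_uCoord_vCoord p]
  exact ofCoords_mem_of_uCoord_eq hC hyC hzC ⟨hy, hz⟩

theorem convexHull_eq_polygon (h₁ : u₀ + v₀ ≤ w₀) (h₂ : w₀ ≤ u₀ + v₁) (h₃ : w₀ ≤ u₁ + v₀)
    (h₄ : u₀ + v₁ ≤ w₁) (h₅ : u₁ + v₀ ≤ w₁) (h₆ : w₁ ≤ u₁ + v₁) : convexHull ℝ
      {ofCoords u₀ (w₀ - u₀), ofCoords u₀ v₁, ofCoords (w₁ - v₁) v₁, ofCoords u₁ (w₁ - u₁),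
        ofCoords u₁ v₀, ofCoords (w₀ - v₀) v₀} = polygon u₀ u₁ v₀ v₁ w₀ w₁ := by
  refine (convexHull_min ?_ convex_polygon).antisymm
    (polygon_subset_of_convex (convex_convexHull ℝ _) (subset_convexHull ℝ _))
  simp only [← Int.cast_le (R := ℝ), Int.cast_add] at h₁ h₂ h₃ h₄ h₅ h₆
  simp only [insert_subset_iff, singleton_subset_iff, polygon, mem_inter_iff, mem_preimage,
    mem_Icc, uCoord_ofCoords, vCoord_ofCoords, wCoord_ofCoords]
  refine ⟨?_, ?_, ?_, ?_, ?_, ?_⟩ <;> refine ⟨⟨?_, ?_⟩, ⟨?_, ?_⟩, ?_, ?_⟩ <;> linarith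

end Polygon

section Lozenges

/-- The lattice polygon that a lozenge stands for. -/
def Lozenge.shape : Lozenge → Set Pt
  | uv i j => polygon i (i + 1) j (j + 1) (i + j) (i + j + 2)
  | uw i j => polygon i (i + 1) j (j + 2) (i + j + 1) (i + j + 2)
  | vw i j => polygon (i - 1) (i + 1) j (j + 1) (i + j) (i + j + 1)

/-- The vertices of the parallelogram at `p` spanned by `d` and `e`, as in `IsLozenge`. -/
def parallelogram (p d e : Pt) : Set Pt := {p, p + d, p + e, p + d + e}

theorem parallelogram_comm (p d e : Pt) : parallelogram p d e = parallelogram p e d := by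
  rw [parallelogram, parallelogram, add_right_comm p d e, insert_comm (p + d)]

theorem parallelogram_neg_left (p d e : Pt) :
    parallelogram p (-d) e = parallelogram (p - d) d e := by
  rw [parallelogram, parallelogram, ← sub_eq_add_neg, sub_add_cancel, sub_add_eq_add_sub,
    insert_comm p, pair_comm (p + e)]

/-- The vertices of the shape of a lozenge. -/
def Lozenge.vertices : Lozenge → Set Pt
  | uv i j => parallelogram (ofCoords i j) (ofCoords 1 0) (ofCoords 0 1)
  | uw i j => parallelogram (ofCoords i (j + 1)) (ofCoords 0 1) (ofCoords 1 (-1))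
  | vw i j => parallelogram (ofCoords (i - 1) (j + 1)) (ofCoords 1 0) (ofCoords 1 (-1))

theorem convexHull_vertices (x : Lozenge) : convexHull ℝ x.vertices = x.shape := by
  rcases x with ⟨i, j⟩ | ⟨i, j⟩ | ⟨i, j⟩ <;>
  · rw [Lozenge.shape,
      ← convexHull_eq_polygon (by lia) (by lia) (by lia) (by lia) (by lia) (by lia)]
    congr 1
    ext q
    simp only [Lozenge.vertices, parallelogram, ofCoords_add, mem_insert_iff, mem_singleton_iff]
    push_cast
    ring_nf
    tauto

/-- The unit vectors in lattice directions up to sign. -/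
def latticeDirections : Set Pt := {ofCoords 1 0, ofCoords 0 1, ofCoords 1 (-1)}

theorem mem_unitVecs {d : Pt} :
    d ∈ unitVecs ↔ d ∈ latticeDirections ∨ -d ∈ latticeDirections := by
  simp only [unitVecs, latticeDirections, mem_insert_iff, mem_singleton_iff, neg_eq_iff_eq_neg,
    ofCoords]
  norm_num [neg_div]
  tauto

theorem mem_triLattice {p : Pt} : p ∈ triLattice ↔ ∃ m n : ℤ, p = ofCoords m n := by
  simp only [triLattice, ofCoords, mem_ofPred_eq, add_comm]

theorem sub_mem_triLattice {p d : Pt} (hp : p ∈ triLattice) (hd : d ∈ latticeDirections) :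
    p - d ∈ triLattice := by
  rw [mem_triLattice] at hp ⊢
  obtain ⟨m, n, rfl⟩ := hp
  rcases hd with rfl | rfl | rfl <;> rw [ofCoords_sub]
  · exact ⟨m - 1, n, by push_cast; rw [sub_zero]⟩
  · exact ⟨m, n - 1, by push_cast; rw [sub_zero]⟩
  · exact ⟨m - 1, n + 1, by push_cast; rw [sub_neg_eq_add]⟩

theorem exists_vertices_eq_parallelogram {p d e : Pt} (hp : p ∈ triLattice)
    (hd : d ∈ latticeDirections) (he : e ∈ latticeDirections) (hde : d ≠ e) :
    ∃ x : Lozenge, x.vertices = parallelogram p d e := by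
  obtain ⟨m, n, rfl⟩ := mem_triLattice.mp hp
  have huv : (Lozenge.uv m n).vertices =
      parallelogram (ofCoords m n) (ofCoords 1 0) (ofCoords 0 1) := rfl
  have huw : (Lozenge.uw m (n - 1)).vertices =
      parallelogram (ofCoords m n) (ofCoords 0 1) (ofCoords 1 (-1)) := by
    rw [Lozenge.vertices, Int.cast_sub, Int.cast_one, sub_add_cancel]
  have hvw : (Lozenge.vw (m + 1) (n - 1)).vertices =
      parallelogram (ofCoords m n) (ofCoords 1 0) (ofCoords 1 (-1)) := by
    rw [Lozenge.vertices, Int.cast_sub, Int.cast_add, Int.cast_one, add_sub_cancel_right,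
      sub_add_cancel]
  rcases hd with rfl | rfl | rfl <;> rcases he with rfl | rfl | rfl
  · exact absurd rfl hde
  · exact ⟨_, huv⟩
  · exact ⟨_, hvw⟩
  · exact ⟨_, huv.trans (parallelogram_comm _ _ _)⟩
  · exact absurd rfl hde
  · exact ⟨_, huw⟩
  · exact ⟨_, hvw.trans (parallelogram_comm _ _ _)⟩
  · exact ⟨_, huw.trans (parallelogram_comm _ _ _)⟩
  · exact absurd rfl hde

theorem exists_vertices_eq_of_mem_unitVecs_right {p d e : Pt} (hp : p ∈ triLattice)
    (hd : d ∈ latticeDirections) (he : e ∈ unitVecs) (hde : d ≠ e) (hde' : d ≠ -e) :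
    ∃ x : Lozenge, x.vertices = parallelogram p d e := by
  rcases mem_unitVecs.mp he with he | he
  · exact exists_vertices_eq_parallelogram hp hd he hde
  · rw [parallelogram_comm, ← neg_neg e, parallelogram_neg_left, parallelogram_comm]
    exact exists_vertices_eq_parallelogram (sub_mem_triLattice hp he) hd he hde'

theorem exists_vertices_eq_of_mem_unitVecs {p d e : Pt} (hp : p ∈ triLattice) (hd : d ∈ unitVecs)
    (he : e ∈ unitVecs) (hde : d ≠ e) (hde' : d ≠ -e) :
    ∃ x : Lozenge, x.vertices = parallelogram p d e := by
  rcases mem_unitVecs.mp hd with hd | hd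
  · exact exists_vertices_eq_of_mem_unitVecs_right hp hd he hde hde'
  · rw [← neg_neg d, parallelogram_neg_left]
    exact exists_vertices_eq_of_mem_unitVecs_right (sub_mem_triLattice hp hd) hd he
      (by simpa [neg_eq_iff_eq_neg] using hde') (neg_injective.ne hde)

theorem isLozenge_convexHull_parallelogram {p d e : Pt} (hp : p ∈ triLattice)
    (hd : d ∈ latticeDirections) (he : e ∈ latticeDirections) (hde : d ≠ e) (hde' : d ≠ -e) :
    IsLozenge (convexHull ℝ (parallelogram p d e)) :=
  ⟨p, d, e, hp, mem_unitVecs.mpr (.inl hd), mem_unitVecs.mpr (.inl he), hde, hde', rfl⟩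

theorem isLozenge_shape (x : Lozenge) : IsLozenge x.shape := by
  rw [← convexHull_vertices]
  rcases x with ⟨i, j⟩ | ⟨i, j⟩ | ⟨i, j⟩ <;>
    refine isLozenge_convexHull_parallelogram (mem_triLattice.mpr ?_)
      (by simp [latticeDirections]) (by simp [latticeDirections])
      (by norm_num [ofCoords_inj]) (by norm_num [ofCoords_inj, ofCoords_neg])
  · exact ⟨i, j, rfl⟩
  · exact ⟨i, j + 1, by push_cast; rfl⟩
  · exact ⟨i - 1, j + 1, by push_cast; rfl⟩

theorem isLozenge_iff {L : Set Pt} : IsLozenge L ↔ L ∈ range Lozenge.shape := by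
  constructor
  · rintro ⟨p, d, e, hp, hd, he, hde, hde', rfl⟩
    obtain ⟨x, hx⟩ := exists_vertices_eq_of_mem_unitVecs hp hd he hde hde'
    exact ⟨x, by rw [← convexHull_vertices, hx, parallelogram]⟩
  · rintro ⟨x, rfl⟩
    exact isLozenge_shape x

end Lozenges

section Cells

theorem floor_ceil_coords (p : Pt) :
    (⌊uCoord p⌋ ≤ ⌈uCoord p⌉ ∧ ⌈uCoord p⌉ ≤ ⌊uCoord p⌋ + 1) ∧
    (⌊vCoord p⌋ ≤ ⌈vCoord p⌉ ∧ ⌈vCoord p⌉ ≤ ⌊vCoord p⌋ + 1) ∧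
    (⌊wCoord p⌋ ≤ ⌈wCoord p⌉ ∧ ⌈wCoord p⌉ ≤ ⌊wCoord p⌋ + 1) ∧
    (⌊uCoord p⌋ + ⌊vCoord p⌋ ≤ ⌊wCoord p⌋ ∧ ⌊wCoord p⌋ ≤ ⌊uCoord p⌋ + ⌈vCoord p⌉ ∧
      ⌊wCoord p⌋ ≤ ⌈uCoord p⌉ + ⌊vCoord p⌋) ∧
    ⌊uCoord p⌋ + ⌈vCoord p⌉ ≤ ⌈wCoord p⌉ ∧ ⌈uCoord p⌉ + ⌊vCoord p⌋ ≤ ⌈wCoord p⌉ ∧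
      ⌈wCoord p⌉ ≤ ⌈uCoord p⌉ + ⌈vCoord p⌉ := by
  have hfc (x : ℝ) : ⌊x⌋ ≤ ⌈x⌉ ∧ ⌈x⌉ ≤ ⌊x⌋ + 1 := ⟨Int.floor_le_ceil x, Int.ceil_le_floor_add_one x⟩
  have hfloor (x y : ℝ) : ⌊x + y⌋ ≤ ⌊x⌋ + ⌈y⌉ := by
    rw [← Int.floor_add_intCast]
    exact Int.floor_mono (by gcongr; exact Int.le_ceil y)
  have hceil (x y : ℝ) : ⌊x⌋ + ⌈y⌉ ≤ ⌈x + y⌉ := by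
    rw [← Int.ceil_intCast_add]
    exact Int.ceil_mono (by gcongr; exact Int.floor_le x)
  rw [wCoord_apply]
  exact ⟨hfc _, hfc _, hfc _, ⟨Int.le_floor_add _ _, hfloor _ _,
    by rw [add_comm, add_comm ⌈_⌉]; exact hfloor _ _⟩, hceil _ _,
    by rw [add_comm, add_comm (uCoord p)]; exact hceil _ _, Int.ceil_add_le _ _⟩

/-- The lattice triangle that a cell stands for. -/
def Cell.triangle : Cell → Set Pt
  | right i j => polygon i (i + 1) j (j + 1) (i + j) (i + j + 1)
  | left i j => polygon i (i + 1) j (j + 1) (i + j + 1) (i + j + 2)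

theorem mem_shape_iff {x : Lozenge} {p : Pt} :
    p ∈ x.shape ↔ ∃ c ∈ x.cells, p ∈ c.triangle := by
  have := floor_ceil_coords p
  rcases x with ⟨i, j⟩ | ⟨i, j⟩ | ⟨i, j⟩ <;>
    simp only [Lozenge.shape, Lozenge.cells, mem_insert_iff, mem_singleton_iff, exists_eq_or_imp,
      exists_eq_left, Cell.triangle, mem_polygon] <;>
    omega

theorem mem_cells_of_mem_interior_shape {x : Lozenge} {c : Cell} {p : Pt}
    (hx : p ∈ interior x.shape) (hc : p ∈ c.triangle) : c ∈ x.cells := by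
  have := floor_ceil_coords p
  rcases x with ⟨i, j⟩ | ⟨i, j⟩ | ⟨i, j⟩ <;> rcases c with ⟨m, n⟩ | ⟨m, n⟩ <;>
    simp only [Lozenge.shape, Lozenge.cells, mem_insert_iff, mem_singleton_iff, Cell.triangle,
      mem_polygon, mem_interior_polygon, Cell.right.injEq, Cell.left.injEq, reduceCtorEq, or_false,
      false_or] at hx hc ⊢ <;>
    omega

/-- The centre of gravity of a cell. -/
def Cell.centroid : Cell → Pt
  | right i j => ofCoords (i + 1 / 3) (j + 1 / 3)
  | left i j => ofCoords (i + 2 / 3) (j + 2 / 3)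

theorem floor_ceil_coords_centroid_right (i j : ℤ) :
    (⌊uCoord (Cell.right i j).centroid⌋ = i ∧ ⌈uCoord (Cell.right i j).centroid⌉ = i + 1) ∧
    (⌊vCoord (Cell.right i j).centroid⌋ = j ∧ ⌈vCoord (Cell.right i j).centroid⌉ = j + 1) ∧
    ⌊wCoord (Cell.right i j).centroid⌋ = i + j ∧
      ⌈wCoord (Cell.right i j).centroid⌉ = i + j + 1 := by
  simp only [Cell.centroid, uCoord_ofCoords, vCoord_ofCoords, wCoord_ofCoords, Int.floor_eq_iff,
    Int.ceil_eq_iff]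
  push_cast
  refine ⟨⟨⟨?_, ?_⟩, ?_, ?_⟩, ⟨⟨?_, ?_⟩, ?_, ?_⟩, ⟨?_, ?_⟩, ?_, ?_⟩ <;> linarith

theorem floor_ceil_coords_centroid_left (i j : ℤ) :
    (⌊uCoord (Cell.left i j).centroid⌋ = i ∧ ⌈uCoord (Cell.left i j).centroid⌉ = i + 1) ∧
    (⌊vCoord (Cell.left i j).centroid⌋ = j ∧ ⌈vCoord (Cell.left i j).centroid⌉ = j + 1) ∧
    ⌊wCoord (Cell.left i j).centroid⌋ = i + j + 1 ∧
      ⌈wCoord (Cell.left i j).centroid⌉ = i + j + 2 := by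
  simp only [Cell.centroid, uCoord_ofCoords, vCoord_ofCoords, wCoord_ofCoords, Int.floor_eq_iff,
    Int.ceil_eq_iff]
  push_cast
  refine ⟨⟨⟨?_, ?_⟩, ?_, ?_⟩, ⟨⟨?_, ?_⟩, ?_, ?_⟩, ⟨?_, ?_⟩, ?_, ?_⟩ <;> linarith

theorem centroid_mem_triangle {c d : Cell} : c.centroid ∈ d.triangle ↔ d = c := by
  rcases c with ⟨i, j⟩ | ⟨i, j⟩
  · have := floor_ceil_coords_centroid_right i j
    rcases d with ⟨m, n⟩ | ⟨m, n⟩ <;>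
      simp only [Cell.triangle, mem_polygon, this, Cell.right.injEq, reduceCtorEq, iff_false] <;>
      omega
  · have := floor_ceil_coords_centroid_left i j
    rcases d with ⟨m, n⟩ | ⟨m, n⟩ <;>
      simp only [Cell.triangle, mem_polygon, this, Cell.left.injEq, reduceCtorEq, iff_false] <;>
      omega

theorem centroid_mem_shape {c : Cell} {x : Lozenge} : c.centroid ∈ x.shape ↔ c ∈ x.cells := by
  simp only [mem_shape_iff, centroid_mem_triangle, exists_eq_right]

theorem centroid_mem_interior_shape {c : Cell} {x : Lozenge} (hc : c ∈ x.cells) :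
    c.centroid ∈ interior x.shape := by
  rcases c with ⟨i, j⟩ | ⟨i, j⟩
  · have := floor_ceil_coords_centroid_right i j
    rcases Lozenge.right_mem_cells.mp hc with rfl | rfl | rfl <;>
      simp only [Lozenge.shape, mem_interior_polygon, this] <;> omega
  · have := floor_ceil_coords_centroid_left i j
    rcases Lozenge.left_mem_cells.mp hc with rfl | rfl | rfl <;>
      simp only [Lozenge.shape, mem_interior_polygon, this] <;> omega

theorem Lozenge.cells_injective : Function.Injective Lozenge.cells := by
  intro x y h
  have hcells (c : Cell) : c ∈ x.cells ↔ c ∈ y.cells := by rw [h]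
  rcases x with ⟨i, j⟩ | ⟨i, j⟩ | ⟨i, j⟩
  · have h₁ := right_mem_cells.mp ((hcells (.right i j)).mp (by simp [cells]))
    have h₂ := left_mem_cells.mp ((hcells (.left i j)).mp (by simp [cells]))
    grind
  · have h₁ := right_mem_cells.mp ((hcells (.right i (j + 1))).mp (by simp [cells]))
    have h₂ := left_mem_cells.mp ((hcells (.left i j)).mp (by simp [cells]))
    grind
  · have h₁ := right_mem_cells.mp ((hcells (.right i j)).mp (by simp [cells]))
    have h₂ := left_mem_cells.mp ((hcells (.left (i - 1) j)).mp (by simp [cells]))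
    grind

theorem Lozenge.shape_injective : Function.Injective Lozenge.shape := fun x y h =>
  cells_injective (Set.ext fun c => by rw [← centroid_mem_shape, h, centroid_mem_shape])

theorem isLozengeTiling_image_shape_iff {R : Set Pt} {P : Cell → Prop}
    (hR : ∀ p, p ∈ R ↔ ∃ c : Cell, P c ∧ p ∈ c.triangle) {τ : Set Lozenge} :
    IsLozengeTiling R (Lozenge.shape '' τ) ↔ ∀ c, IsTiledAt P τ c := by
  have hcentroid (c : Cell) : c.centroid ∈ R ↔ P c := by
    simp only [hR, centroid_mem_triangle, exists_eq_right]
  constructor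
  · rintro ⟨-, rfl, hdisj⟩ c
    refine ⟨?_, fun x ⟨hx, hcx⟩ y ⟨hy, hcy⟩ => ?_⟩
    · simp [← hcentroid, centroid_mem_shape]
    · by_contra hxy
      have hempty := hdisj _ ⟨x, hx, rfl⟩ _ ⟨y, hy, rfl⟩ (Lozenge.shape_injective.ne hxy)
      exact hempty.le ⟨centroid_mem_interior_shape hcx, centroid_mem_interior_shape hcy⟩
  · intro hτ
    refine ⟨?_, Set.ext fun p => ?_, ?_⟩
    · rintro _ ⟨x, -, rfl⟩
      exact isLozenge_shape x
    · simp only [hR, (hτ _).1, sUnion_image, mem_iUnion₂, mem_shape_iff]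
      grind
    · rintro _ ⟨x, hx, rfl⟩ _ ⟨y, hy, rfl⟩ hxy
      refine eq_empty_of_forall_notMem fun p ⟨hpx, hpy⟩ => hxy ?_
      obtain ⟨c, hcx, hpc⟩ := mem_shape_iff.mp (interior_subset hpx)
      rw [(hτ c).2 ⟨hx, hcx⟩ ⟨hy, mem_cells_of_mem_interior_shape hpy hpc⟩]

end Cells

section Region

theorem hexagon_eq_polygon (a b : ℕ) :
    hexagon (2 * a) b = polygon 0 (4 * a) (-2 * a) (2 * b) 0 (2 * a + 2 * b) := by
  rw [← convexHull_eq_polygon (by lia) (by lia) (by lia) (by lia) (by lia) (by lia), hexagon]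
  simp only [ofCoords]
  push_cast
  ring_nf

theorem leftHole_eq_polygon (b k : ℕ) : leftHole b k =
    polygon (2 * k - 2) (2 * k) (b - k - 1) (b - k + 1) (b + k - 1) (b + k + 1) := by
  rw [← convexHull_eq_polygon (by lia) (by lia) (by lia) (by lia) (by lia) (by lia), leftHole]
  congr 1
  simp only [ofCoords]
  push_cast
  ring_nf
  ext q
  simp only [mem_insert_iff, mem_singleton_iff]
  tauto

theorem rightHole_eq_polygon (a b k : ℕ) : rightHole (2 * a) b k =
    polygon (4 * a - 2 * k) (4 * a - 2 * k + 2) (b - 2 * a + k - 1) (b - 2 * a + k + 1)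
      (b + 2 * a - k - 1) (b + 2 * a - k + 1) := by
  rw [← convexHull_eq_polygon (by lia) (by lia) (by lia) (by lia) (by lia) (by lia), rightHole]
  congr 1
  simp only [ofCoords]
  push_cast
  ring_nf
  ext q
  simp only [mem_insert_iff, mem_singleton_iff]
  tauto

variable {a b : ℕ} {K : Finset ℕ} {c : Cell} {p : Pt}

theorem floor_ceil_coords_rot180 (a b : ℕ) (p : Pt) :
    (⌊uCoord (rot180 (2 * a) b p)⌋ = 4 * a - ⌈uCoord p⌉ ∧
      ⌈uCoord (rot180 (2 * a) b p)⌉ = 4 * a - ⌊uCoord p⌋) ∧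
    (⌊vCoord (rot180 (2 * a) b p)⌋ = 2 * b - 2 * a - ⌈vCoord p⌉ ∧
      ⌈vCoord (rot180 (2 * a) b p)⌉ = 2 * b - 2 * a - ⌊vCoord p⌋) ∧
    ⌊wCoord (rot180 (2 * a) b p)⌋ = 2 * a + 2 * b - ⌈wCoord p⌉ ∧
      ⌈wCoord (rot180 (2 * a) b p)⌉ = 2 * a + 2 * b - ⌊wCoord p⌋ := by
  have hcoords : rot180 (2 * a) b p =
      ofCoords ((4 * a : ℤ) - uCoord p) ((2 * b - 2 * a : ℤ) - vCoord p) := by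
    rw [Int.cast_sub]
    nth_rw 1 [← ofCoords_uCoord_vCoord p]
    rw [rot180, ofCoords, ofCoords]
    push_cast
    ring_nf
  have hw : (4 * a : ℤ) - uCoord p + ((2 * b - 2 * a : ℤ) - vCoord p) =
      (2 * a + 2 * b : ℤ) - wCoord p := by
    rw [wCoord_apply]
    push_cast
    ring
  rw [hcoords, wCoord_ofCoords, uCoord_ofCoords, vCoord_ofCoords, hw]
  have hfloor (m : ℤ) (x : ℝ) : ⌊m - x⌋ = m - ⌈x⌉ := by
    rw [sub_eq_add_neg, Int.floor_intCast_add, Int.floor_neg, sub_eq_add_neg]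
  have hceil (m : ℤ) (x : ℝ) : ⌈m - x⌉ = m - ⌊x⌋ := by
    rw [sub_eq_add_neg, Int.ceil_intCast_add, Int.ceil_neg, sub_eq_add_neg]
  exact ⟨⟨hfloor _ _, hceil _ _⟩, ⟨hfloor _ _, hceil _ _⟩, hfloor _ _, hceil _ _⟩

theorem rot180_involutive (a b : ℕ) : Function.Involutive (rot180 a b) := fun p => by
  simp [rot180]

theorem rot180_mem_triangle_rot : rot180 (2 * a) b p ∈ (c.rot a b).triangle ↔ p ∈ c.triangle := by
  have hrot := floor_ceil_coords_rot180 a b p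
  rcases c with ⟨i, j⟩ | ⟨i, j⟩ <;>
    simp only [Cell.rot, Cell.triangle, mem_polygon, hrot] <;> omega

theorem rot180_image_shape (x : Lozenge) : rot180 (2 * a) b '' x.shape = (x.rot a b).shape := by
  rw [(rot180_involutive _ b).image_eq_preimage_symm]
  ext p
  have hrot := floor_ceil_coords_rot180 a b p
  rcases x with ⟨i, j⟩ | ⟨i, j⟩ | ⟨i, j⟩ <;>
    simp only [Lozenge.rot, Lozenge.shape, mem_preimage, mem_polygon, hrot] <;> omega

theorem mem_interior_rightHole {k : ℕ} : p ∈ interior (rightHole (2 * a) b k) ↔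
    rot180 (2 * a) b p ∈ interior (leftHole b k) := by
  have hrot := floor_ceil_coords_rot180 a b p
  rw [rightHole_eq_polygon, leftHole_eq_polygon, mem_interior_polygon, mem_interior_polygon]
  simp only [hrot]
  omega

theorem mem_hexagon_of_isHexagonCell (hc : IsHexagonCell a b c) (hp : p ∈ c.triangle) :
    p ∈ hexagon (2 * a) b := by
  have hcoords := floor_ceil_coords p
  rw [hexagon_eq_polygon, mem_polygon]
  rcases c with ⟨i, j⟩ | ⟨i, j⟩ <;>
    simp only [IsHexagonCell, Cell.triangle, mem_polygon] at hc hp <;> omega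

theorem exists_isHexagonCell (ha : 0 < a) (hp : p ∈ hexagon (2 * a) b) :
    ∃ c, IsHexagonCell a b c ∧ p ∈ c.triangle := by
  rw [hexagon_eq_polygon, mem_polygon] at hp
  have hcoords := floor_ceil_coords p
  obtain ⟨i, hi⟩ : ∃ i : ℤ, 0 ≤ i ∧ i ≤ 4 * a - 1 ∧ i ≤ ⌊uCoord p⌋ ∧ ⌈uCoord p⌉ ≤ i + 1 := by
    rcases eq_or_ne ⌊uCoord p⌋ (4 * a) with h | h
    · exact ⟨4 * a - 1, by omega⟩
    · exact ⟨⌊uCoord p⌋, by omega⟩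
  by_contra! h
  have hright := h (.right i ⌊vCoord p⌋)
  have hleft := h (.left i ⌊vCoord p⌋)
  have hright' := h (.right i (⌊vCoord p⌋ - 1))
  have hleft' := h (.left i (⌊vCoord p⌋ - 1))
  simp only [IsHexagonCell, Cell.triangle, mem_polygon] at hright hleft hright' hleft'
  omega

theorem isHoleCell_of_mem_interior_leftHole {k : ℕ} (hp : p ∈ interior (leftHole b k))
    (hc : p ∈ c.triangle) : IsHoleCell b k c := by
  have hcoords := floor_ceil_coords p
  rw [leftHole_eq_polygon, mem_interior_polygon] at hp
  rcases c with ⟨i, j⟩ | ⟨i, j⟩ <;> simp only [IsHoleCell, Cell.triangle, mem_polygon] at hc ⊢ <;>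
    omega

/- A cell of a hole that touches a point outside the open hole does so on a side of the hole, so
some cell on the other side of that side touches the point too. -/
theorem exists_isRegionCell_of_isHoleCell (hb : 0 < b) (hK : ∀ k ∈ K, 0 < k ∧ k < a) {k : ℕ}
    (hk : k ∈ K) (hc : IsHoleCell b k c) (hpc : p ∈ c.triangle)
    (hp : p ∉ interior (leftHole b k)) : ∃ d, IsRegionCell a b K d ∧ p ∈ d.triangle := by
  have hka := hK k hk
  have hcoords := floor_ceil_coords p
  rw [leftHole_eq_polygon, mem_interior_polygon] at hp
  have hpk : 2 * k - 2 ≤ ⌊uCoord p⌋ ∧ ⌈uCoord p⌉ ≤ 2 * k ∧ ⌈vCoord p⌉ ≤ b - k + 1 ∧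
      b + k - 1 ≤ ⌊wCoord p⌋ := by
    rcases c with ⟨i, j⟩ | ⟨i, j⟩ <;>
      simp only [IsHoleCell, Cell.triangle, mem_polygon] at hc hpc <;> omega
  obtain hu | hv | hw : ⌊uCoord p⌋ = 2 * k ∨ (⌊uCoord p⌋ < 2 * k ∧ ⌊vCoord p⌋ = b - k + 1) ∨
      (⌊uCoord p⌋ < 2 * k ∧ ⌈wCoord p⌉ = b + k - 1) := by omega
  · refine ⟨.right (2 * k) ⌊vCoord p⌋, ⟨?_, fun l hl => ?_⟩, ?_⟩
    · simp only [IsHexagonCell]; omega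
    · have hla := hK l hl
      simp only [IsHoleCell, Cell.rot]; omega
    · simp only [Cell.triangle, mem_polygon]; omega
  · refine ⟨.right ⌊uCoord p⌋ (b - k + 1), ⟨?_, fun l hl => ?_⟩, ?_⟩
    · simp only [IsHexagonCell]; omega
    · have hla := hK l hl
      simp only [IsHoleCell, Cell.rot]; omega
    · simp only [Cell.triangle, mem_polygon]; omega
  · refine ⟨.right ⌊uCoord p⌋ (b + k - 2 - ⌊uCoord p⌋), ⟨?_, fun l hl => ?_⟩, ?_⟩
    · simp only [IsHexagonCell]; omega
    · have hla := hK l hl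
      simp only [IsHoleCell, Cell.rot]; omega
    · simp only [Cell.triangle, mem_polygon]; omega

theorem mem_Hreg {s : ℕ} {k : Fin s → ℕ} : p ∈ Hreg (2 * a) b s k ↔ p ∈ hexagon (2 * a) b ∧
    ∀ l ∈ Finset.univ.image k, p ∉ interior (leftHole b l) ∧
      rot180 (2 * a) b p ∉ interior (leftHole b l) := by
  simp only [Hreg, mem_sdiff, mem_iUnion, mem_union, mem_interior_rightHole, not_exists, not_or,
    Finset.mem_image, Finset.mem_univ, true_and, forall_exists_index, forall_apply_eq_imp_iff]

theorem mem_Hreg_iff_exists_isRegionCell (ha : 0 < a) (hb : 0 < b) {s : ℕ} {k : Fin s → ℕ}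
    (hk : ∀ i, 0 < k i ∧ k i < a) : p ∈ Hreg (2 * a) b s k ↔
      ∃ c, IsRegionCell a b (Finset.univ.image k) c ∧ p ∈ c.triangle := by
  have hK : ∀ l ∈ Finset.univ.image k, 0 < l ∧ l < a := by simpa using hk
  rw [mem_Hreg]
  constructor
  · rintro ⟨hp, hholes⟩
    obtain ⟨c, hc, hpc⟩ := exists_isHexagonCell ha hp
    by_cases hreg : IsRegionCell a b (Finset.univ.image k) c
    · exact ⟨c, hreg, hpc⟩
    obtain ⟨l, hl, hcl⟩ : ∃ l ∈ Finset.univ.image k, IsHoleCell b l c ∨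
        IsHoleCell b l (c.rot a b) := by
      by_contra! h
      exact hreg ⟨hc, h⟩
    rcases hcl with hcl | hcl
    · exact exists_isRegionCell_of_isHoleCell hb hK hl hcl hpc (hholes l hl).1
    · obtain ⟨d, hd, hpd⟩ := exists_isRegionCell_of_isHoleCell hb hK hl hcl
        (rot180_mem_triangle_rot.mpr hpc) (hholes l hl).2
      refine ⟨d.rot a b, isRegionCell_rot.mpr hd, ?_⟩
      rwa [← rot180_mem_triangle_rot (a := a) (b := b), Cell.rot_rot]
  · rintro ⟨c, ⟨hc, hholes⟩, hpc⟩
    exact ⟨mem_hexagon_of_isHexagonCell hc hpc, fun l hl =>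
      ⟨fun h => (hholes l hl).1 (isHoleCell_of_mem_interior_leftHole h hpc),
      fun h => (hholes l hl).2
        (isHoleCell_of_mem_interior_leftHole h (rot180_mem_triangle_rot.mpr hpc))⟩⟩

end Region

section Count

variable {a b : ℕ}

theorem rotInvariant_image_shape_iff {τ : Set Lozenge} :
    RotInvariant (2 * a) b (Lozenge.shape '' τ) ↔ IsRotInvariant a b τ := by
  simp only [RotInvariant, IsRotInvariant, forall_mem_image, rot180_image_shape,
    Lozenge.shape_injective.mem_set_image]

theorem Mrot_Hreg_eq_sum_pathCount (ha : 0 < a) (hb : 0 < b) {s : ℕ} {k : Fin s → ℕ}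
    (hk : ∀ i, 0 < k i ∧ k i < a) : Mrot (2 * a) b (Hreg (2 * a) b s k) =
      ∑ S ∈ symmetricSets ((b : ℤ) - a) (a + b),
        pathCount b (Finset.univ.image k) (2 * a) S := by
  rw [← card_rotInvariant_tilings ha (by simpa using fun i => (hk i).2), Mrot]
  symm
  have htiling (τ : Set Lozenge) := isLozengeTiling_image_shape_iff (τ := τ)
    fun p => mem_Hreg_iff_exists_isRegionCell (p := p) ha hb hk
  refine Nat.card_congr (Equiv.ofBijective (fun τ => ⟨Lozenge.shape '' τ.1,
    (htiling τ.1).mpr τ.2.1, rotInvariant_image_shape_iff.mpr τ.2.2⟩) ⟨?_, ?_⟩)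
  · intro τ τ' h
    exact Subtype.ext (Lozenge.shape_injective.image_injective (congrArg Subtype.val h))
  · rintro ⟨T, hT, hrot⟩
    obtain ⟨τ, rfl⟩ := subset_range_iff_exists_image_eq.mp fun L hL => isLozenge_iff.mp (hT.1 L hL)
    exact ⟨⟨τ, (htiling τ).mp hT, rotInvariant_image_shape_iff.mp hrot⟩, rfl⟩

end Count

theorem exists_sumEquiv_inr_eq {α β : Type*} [Finite α] {f : β → α}
    (hf : Function.Injective f) :
    ∃ (m : ℕ) (e : Fin m ⊕ β ≃ α), (∀ y, e (.inr y) = f y) ∧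
      ∀ x, x ∈ Set.range (fun i => e (.inl i)) ↔ x ∉ Set.range f := by
  classical
  obtain ⟨m, ⟨g⟩⟩ := Finite.exists_equiv_fin ↥(Set.range f)ᶜ
  refine ⟨m, (Equiv.sumComm _ _).trans (((Equiv.ofInjective f hf).sumCongr g.symm).trans
    (Equiv.Set.sumCompl (Set.range f))), fun y => by simp, fun x => ⟨?_, fun hx => ?_⟩⟩
  · rintro ⟨i, rfl⟩
    have := (g.symm i).2
    rwa [Set.mem_compl_iff] at this
  · exact ⟨g ⟨x, hx⟩, by simp⟩

theorem exists_sumEquiv_pathExponents {a b s n : ℕ} {k : Fin s → ℕ} (hka : ∀ i, k i < a)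
    {q : Fin n → ℕ} (hq : Function.Injective q)
    (hqrange : Finset.image q Finset.univ
      = Finset.Icc 1 a \ Finset.image (fun i => a - k i + 1) Finset.univ) :
    ∃ (m : ℕ) (e : Fin m ⊕ Fin n ≃ Fin (a + b)), (∀ j, (e (.inr j) : ℕ) + 1 = q j) ∧
      Finset.univ.image (fun i => (e (.inl i) : ℕ)) =
        pathExponents b (Finset.univ.image k) a := by
  have hmem (x : ℕ) : (∃ j, q j = x) ↔ (1 ≤ x ∧ x ≤ a) ∧ ∀ i, a - k i + 1 ≠ x := by
    simpa using Finset.ext_iff.mp hqrange x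
  have hqa (j : Fin n) : 1 ≤ q j ∧ q j ≤ a := ((hmem (q j)).mp ⟨j, rfl⟩).1
  obtain ⟨m, e, hinr, hinl⟩ := exists_sumEquiv_inr_eq
    (f := fun j => (⟨q j - 1, by have := hqa j; omega⟩ : Fin (a + b))) fun i j hij => hq (by
      have := hqa i
      have := hqa j
      simp only [Fin.mk.injEq] at hij
      omega)
  refine ⟨m, e, fun j => ?_, Finset.ext fun x => ?_⟩
  · rw [hinr]
    exact Nat.sub_add_cancel (hqa j).1
  · have hmem_inl : x ∈ Finset.univ.image (fun i => (e (.inl i) : ℕ)) ↔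
        x < a + b ∧ ¬ ∃ j, q j = x + 1 := by
      refine ⟨fun h => ?_, fun ⟨h, hne⟩ => ?_⟩
      · obtain ⟨i, -, rfl⟩ := Finset.mem_image.mp h
        refine ⟨(e (.inl i)).2, fun ⟨j, hj⟩ => (hinl _).mp ⟨i, rfl⟩ ⟨j, Fin.ext ?_⟩⟩
        simp [hj]
      · obtain ⟨i, hi⟩ := (hinl ⟨x, h⟩).mpr fun ⟨j, hj⟩ => hne ⟨j, by
          have := hqa j
          have := Fin.mk.inj hj
          omega⟩
        exact Finset.mem_image.mpr ⟨i, Finset.mem_univ i, congrArg Fin.val hi⟩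
    rw [hmem_inl, hmem, pathExponents, Finset.mem_filter, Finset.mem_range]
    simp only [Finset.mem_image, Finset.mem_univ, true_and]
    refine and_congr_right fun _ => ?_
    rcases le_or_gt a x with hax | hxa
    · simp [hax]
    · have hbounds : 1 ≤ x + 1 ∧ x + 1 ≤ a := ⟨x.succ_pos, hxa⟩
      simp only [hbounds, hxa.not_ge, true_and, not_forall, not_not, false_or]
      exact exists_congr fun i => by have := hka i; omega

end Geometry

end HoleyHexagon

open PP HoleyHexagon in
theorem Mrot_Hreg_even_eq_product_sq_general (a b s n : ℕ) (ha : 0 < a) (hb : 0 < b)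
    (k : Fin s → ℕ) (hk : ∀ i, 0 < k i) (hka : ∀ i, k i < a)
    (q : Fin n → ℕ) (hq : Function.Injective q)
    (hqrange : Finset.image q Finset.univ
      = Finset.Icc 1 a \ Finset.image (fun i => a - k i + 1) Finset.univ) :
    (Mrot (2 * a) b (Hreg (2 * a) b s k) : ℚ)
      = ((∏ j : Fin n, ((a + b + q j - 1).choose (2 * q j - 1) : ℚ))
          * ∏ p ∈ Finset.univ.filter (fun p : Fin n × Fin n => p.1 < p.2),
              ((q p.2 : ℚ) - (q p.1 : ℚ)) / ((q p.1 : ℚ) + (q p.2 : ℚ) - 1)) ^ 2 := by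
  obtain ⟨m, e, hinr, he⟩ := exists_sumEquiv_pathExponents (b := b) hka hq hqrange
  rw [Mrot_Hreg_eq_sum_pathCount ha hb fun i => ⟨hk i, hka i⟩, sum_pathCount_symmetricSets e he,
    prod_filter_lt_eq_prod_prod_Ioi]
  obtain rfl : q = fun j => (e (.inr j) : ℕ) + 1 := funext fun j => (hinr j).symm
  refine congrArg (· ^ 2) (congrArg₂ (· * ·) rfl ?_)
  refine Finset.prod_congr rfl fun i _ => Finset.prod_congr rfl fun j _ => ?_
  push_cast
  congr 1 <;> ring

open PP in
/-- `M_⊙(H_{2a,2b}(k_1,…,k_s))` is the perfect square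
`( ∏_j C(a+b+q_j−1, 2q_j−1) · ∏_{j<k} (q_k−q_j)/(q_j+q_k−1) )²`, where
`q_1 < ⋯ < q_{a−s}` enumerates `{1,…,a} \ {a−k_1+1, …, a−k_s+1}`. -/
theorem Mrot_Hreg_even_eq_product_sq (a b s : ℕ) (ha : 0 < a) (hb : 0 < b) (hs : 0 < s)
    (hsa : s < a) (k : Fin s → ℕ) (hmono : StrictMono k)
    (hk2 : ∀ i, 2 ≤ k i) (hka : ∀ i, k i ≤ a - 1)
    (q : Fin (a - s) → ℕ) (hq : StrictMono q)
    (hqrange : Finset.image q Finset.univ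
      = Finset.Icc 1 a \ Finset.image (fun i => a - k i + 1) Finset.univ) :
    (Mrot (2 * a) b (Hreg (2 * a) b s k) : ℚ)
      = ((∏ j : Fin (a - s), ((a + b + q j - 1).choose (2 * q j - 1) : ℚ))
          * ∏ p ∈ Finset.univ.filter (fun p : Fin (a - s) × Fin (a - s) => p.1 < p.2),
              ((q p.2 : ℚ) - (q p.1 : ℚ)) / ((q p.1 : ℚ) + (q p.2 : ℚ) - 1)) ^ 2 :=
  Mrot_Hreg_even_eq_product_sq_general a b s (a - s) ha hb k (fun i => two_pos.trans_le (hk2 i))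
    (fun i => Nat.lt_of_le_pred ha (hka i)) q hq.injective hqrange
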